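/- arXiv:2204.10468 — 4 statements merged into one kernel-verified Lean document; each statement's English description precedes it below -/
import Mathlib

section
/- Let F = ℚ₂(√2) with valuation ring O_F, and let Q(x,y) = αx² + βxy + γy² be a binary quadratic form with α, β, γ ∈ O_F which is a sum of n squares of linear forms over O_F for some positive integer n. Then Q is NOT a sum of 4 squares of linear forms over O_F if and only if Q is equivalent over O_F (i.e., by an invertible change of variables by a matrix in GL₂(O_F)) to the form G(x,y) = 2√2(x² + xy + y²). -/
/-!
The integral closure of `ℤ₂` in `ℚ₂(√2)` is `R = ℤ₂ ⊕ ℤ₂ π` with `π² = 2`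
(`SqrtTwo.isModel`): an integral element `u + v π` has integral norm `u² - 2 v²`, and the two terms
have valuations of different parity. The residue field of `R` has two elements.

Sums of squares in `R` lie in `S = {0, 1} + 2R`, and every unit of `S` is a sum of two squares
(`two_squares`), by solving `y² + y = π z` with Hensel's lemma. Let
`Q = α x² + 2 b x y + γ y²` with `α, γ ∈ S`.

* If `α` is a unit, complete the square: `Q = α (x + c y)² + δ y²` with `δ ∈ S`. Either `δ` is a
  unit, hence a sum of two squares, or `δ - α` is (`rep_of_unit`). The case of a unit `γ` is
  symmetric.
* Otherwise `α = 2a`, `γ = 2c`. Since `-1 = p² + q²` in `R`, the lattice `R⁴` of four squares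
  splits as a hyperbolic plane plus `⟨1, -1⟩`. As `u² - t²` takes all values in
  `2 Rˣ ∪ 4 R`, the form `Q` is represented once `a y² - b y + c` is a unit or divisible by `2` for
  some `y` (`rep_of_hyperbolic`). Taking `y = 0`, `y = 1` and exchanging the variables leaves
  only the case where `a, b, c` all have valuation one (`rep_or_val_one`), and then `Q` is
  equivalent to `2π (x² + x y + y²)` (`equiv_of_units`).

Conversely `2π (x² + x y + y²)` is not represented, by a parity argument on the
`ℤ₂`-coordinates of the representing vectors (`parity`, `not_rep`).
-/

/-- The binary quadratic form `α x² + β x y + γ y²` (with coefficients in a field `F`) is a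
sum of `n` squares of linear forms with coefficients in the subset `O ⊆ F`. -/
def IsSumOfLinSq {F : Type*} [Field F] (O : Set F) (n : ℕ) (α β γ : F) : Prop :=
  ∃ a b : Fin n → F, (∀ i, a i ∈ O) ∧ (∀ i, b i ∈ O) ∧
    α = ∑ i, a i ^ 2 ∧ β = 2 * ∑ i, a i * b i ∧ γ = ∑ i, b i ^ 2

/-- The binary quadratic forms `α x² + β x y + γ y²` and `α' x² + β' x y + γ' y²` are
equivalent over `O ⊆ F`: one is obtained from the other by a linear change of variables
given by a matrix `(p q; r s)` in `GL₂(O)` (the determinant `p s - q r` is invertible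
in `O`). -/
def AreEquivForms {F : Type*} [Field F] (O : Set F) (α β γ α' β' γ' : F) : Prop :=
  ∃ p q r s t : F, p ∈ O ∧ q ∈ O ∧ r ∈ O ∧ s ∈ O ∧ t ∈ O ∧ (p * s - q * r) * t = 1 ∧
    α' = α * p ^ 2 + β * (p * r) + γ * r ^ 2 ∧
    β' = 2 * α * (p * q) + β * (p * s + q * r) + 2 * γ * (r * s) ∧
    γ' = α * q ^ 2 + β * (q * s) + γ * s ^ 2

namespace SqrtTwo

/-! ### Parity and a quadratic equation over `ℤ₂` -/

lemma even_or_odd (c : ℤ_[2]) : (∃ k, c = 2 * k) ∨ (∃ k, c = 1 + 2 * k) := by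
  obtain ⟨h1, h2⟩ := PadicInt.zmodRepr_spec c
  rw [PadicInt.maximalIdeal_eq_span_p, Ideal.mem_span_singleton] at h2
  obtain ⟨k, hk⟩ := h2
  have h3 : c.zmodRepr = 0 ∨ c.zmodRepr = 1 := by omega
  rcases h3 with h | h
  · left
    refine ⟨k, ?_⟩
    rw [h] at hk
    push_cast at hk
    linear_combination hk
  · right
    refine ⟨k, ?_⟩
    rw [h] at hk
    push_cast at hk
    linear_combination hk

lemma norm_two_mul_lt (k : ℤ_[2]) : ‖2 * k‖ < 1 := by
  have : ((2 : ℕ) : ℤ_[2]) ∣ 2 * k := by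
    push_cast
    exact dvd_mul_right _ _
  exact (PadicInt.norm_lt_one_iff_dvd _).2 this

lemma isUnit_odd (k : ℤ_[2]) : IsUnit (1 + 2 * k) := by
  have h : IsUnit ((1 + 2 * k) + -(2 * k)) := by
    rw [add_neg_cancel_right]
    exact isUnit_one
  rcases IsLocalRing.isUnit_or_isUnit_of_isUnit_add h with h | h
  · exact h
  · rw [IsUnit.neg_iff, PadicInt.isUnit_iff] at h
    exact absurd h (norm_two_mul_lt k).ne

/-- The two coordinates of the equation `y² + y = 2 z₀ + z₁ √2` for `y = c + d √2`. Eliminating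
`d = z₁ / (1 + 2c)` leaves one polynomial equation in `c`, to which Hensel's lemma applies at
`c = 0`. -/
lemma exists_coords (z0 z1 : ℤ_[2]) :
    ∃ c d : ℤ_[2], c ^ 2 + 2 * d ^ 2 + c = 2 * z0 ∧ 2 * c * d + d = z1 := by
  let f : Polynomial ℤ_[2] :=
    (Polynomial.X ^ 2 + Polynomial.X - Polynomial.C (2 * z0)) * (1 + 2 * Polynomial.X) ^ 2
      + Polynomial.C (2 * z1 ^ 2)
  have hf : ∀ a, Polynomial.aeval a f = (a ^ 2 + a - 2 * z0) * (1 + 2 * a) ^ 2 + 2 * z1 ^ 2 := by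
    intro a
    simp [f]
  have hf' : Polynomial.aeval (0 : ℤ_[2]) (Polynomial.derivative f) = 1 + 2 * (-4 * z0) := by
    simp [f, Polynomial.derivative_pow]
    ring
  have h1 : ‖Polynomial.aeval (0 : ℤ_[2]) (Polynomial.derivative f)‖ = 1 := by
    rw [hf']
    exact PadicInt.isUnit_iff.1 (isUnit_odd _)
  have h2 : ‖Polynomial.aeval (0 : ℤ_[2]) f‖ < 1 := by
    have : Polynomial.aeval (0 : ℤ_[2]) f = 2 * (z1 ^ 2 - z0) := by
      rw [hf]
      ring
    rw [this]
    exact norm_two_mul_lt _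
  obtain ⟨c, hc, -⟩ := hensels_lemma (F := f) (a := (0 : ℤ_[2])) (by rw [h1]; simpa using h2)
  rw [hf] at hc
  obtain ⟨i, hi⟩ := (isUnit_odd c).exists_right_inv
  refine ⟨c, z1 * i, ?_, ?_⟩
  · linear_combination i ^ 2 * hc
      - (c ^ 2 + c - 2 * z0) * ((1 + 2 * c) * i + 1) * hi
  · linear_combination z1 * hi

/-! ### The ring `ℤ₂[√2]` -/

/-- `R` is the ring `ℤ₂[√2]`: the element `π` is a square root of `2`, and `1, π` is a basis of
`R` over `ℤ₂`. -/
structure IsModel (R : Type*) [CommRing R] [Algebra ℤ_[2] R] (π : R) : Prop where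
  sq : π * π = 2
  span : ∀ x : R, ∃ c d : ℤ_[2], x = algebraMap ℤ_[2] R c + algebraMap ℤ_[2] R d * π
  indep : ∀ c d : ℤ_[2], algebraMap ℤ_[2] R c + algebraMap ℤ_[2] R d * π = 0 → c = 0 ∧ d = 0

namespace IsModel

variable {R : Type*} [CommRing R] [Algebra ℤ_[2] R] {π : R}

/-- Artin–Schreier type equations over `π R` are solvable; this is the only form in which
completeness of `R` is used. -/
lemma exists_sq_add (h : IsModel R π) (z : R) : ∃ y : R, y ^ 2 + y = π * z := by
  obtain ⟨z0, z1, rfl⟩ := h.span z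
  obtain ⟨c, d, h1, h2⟩ := exists_coords z1 z0
  refine ⟨algebraMap ℤ_[2] R c + algebraMap ℤ_[2] R d * π, ?_⟩
  have e1 := congrArg (algebraMap ℤ_[2] R) h1
  have e2 := congrArg (algebraMap ℤ_[2] R) h2
  simp only [map_add, map_mul, map_pow, map_ofNat] at e1 e2
  linear_combination e1 + π * e2 +
    ((algebraMap ℤ_[2] R d) ^ 2 - algebraMap ℤ_[2] R z1) * h.sq

lemma dichotomy (h : IsModel R π) (x : R) : (∃ y, x = π * y) ∨ (∃ y, x = 1 + π * y) := by
  obtain ⟨c, d, rfl⟩ := h.span x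
  rcases even_or_odd c with ⟨k, rfl⟩ | ⟨k, rfl⟩
  · left
    refine ⟨π * algebraMap ℤ_[2] R k + algebraMap ℤ_[2] R d, ?_⟩
    simp only [map_mul, map_ofNat]
    linear_combination -(algebraMap ℤ_[2] R k) * h.sq
  · right
    refine ⟨π * algebraMap ℤ_[2] R k + algebraMap ℤ_[2] R d, ?_⟩
    simp only [map_add, map_one, map_mul, map_ofNat]
    linear_combination -(algebraMap ℤ_[2] R k) * h.sq

lemma exists_inv (h : IsModel R π) (y : R) : ∃ i, (1 + π * y) * i = 1 := by
  obtain ⟨c, d, rfl⟩ := h.span y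
  -- The norm of `1 + 2d + cπ` is `(1 + 2d)² - 2c²`, which is odd.
  obtain ⟨j, hj⟩ := (isUnit_odd (2 * d + 2 * d ^ 2 - c ^ 2)).exists_right_inv
  refine ⟨(1 + 2 * algebraMap ℤ_[2] R d - algebraMap ℤ_[2] R c * π) * algebraMap ℤ_[2] R j, ?_⟩
  have e := congrArg (algebraMap ℤ_[2] R) hj
  simp only [map_add, map_one, map_sub, map_mul, map_pow, map_ofNat] at e
  generalize algebraMap ℤ_[2] R c = c at *
  generalize algebraMap ℤ_[2] R d = d at *
  generalize algebraMap ℤ_[2] R j = j at *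
  linear_combination e + j * (d * (1 + 2 * d) - c ^ 2 - c * d * π) * h.sq

/-! ### Sums of two squares -/

lemma one_add_four_pi (h : IsModel R π) (x : R) : ∃ y, 1 + 4 * π * x = y ^ 2 := by
  obtain ⟨y, hy⟩ := h.exists_sq_add x
  exact ⟨1 + 2 * y, by linear_combination -4 * hy⟩

/-- If `ρ` is a sum of two squares and a unit then so is every element of `ρ + 4 π R`. -/
lemma two_squares_of_congr (h : IsModel R π) {ρ u p q x : R} (hρ : ρ = 1 + π * u)
    (hpq : ρ = p ^ 2 + q ^ 2) : ∃ p' q', ρ + 4 * π * x = p' ^ 2 + q' ^ 2 := by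
  obtain ⟨i, hi⟩ := h.exists_inv u
  rw [← hρ] at hi
  obtain ⟨y, hy⟩ := h.one_add_four_pi (i * x)
  refine ⟨p * y, q * y, ?_⟩
  linear_combination ρ * hy - 4 * π * x * hi + y ^ 2 * hpq

/-- Modulo `4 π R` every element `1 + 2k + 4tπ` is one of `1 = 1² + 0²`, `3 = 1² + π²`,
`5 = 1² + 2²`, `15 = (1 - 2π)² + (2 + π)²`. -/
lemma two_squares_aux (h : IsModel R π) (k : ℤ_[2]) (t : R) :
    ∃ p q, 1 + 2 * algebraMap ℤ_[2] R k + 4 * t * π = p ^ 2 + q ^ 2 := by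
  have h2 := h.sq
  rcases even_or_odd k with ⟨k, rfl⟩ | ⟨k, rfl⟩ <;> rcases even_or_odd k with ⟨m, rfl⟩ | ⟨m, rfl⟩ <;>
    simp only [map_add, map_one, map_mul, map_ofNat] <;>
    generalize algebraMap ℤ_[2] R m = m
  · obtain ⟨p, q, e⟩ := h.two_squares_of_congr (ρ := 1) (u := 0) (p := 1) (q := 0)
      (x := π * m + t) (by ring) (by ring)
    exact ⟨p, q, by linear_combination e - 4 * m * h2⟩
  · obtain ⟨p, q, e⟩ := h.two_squares_of_congr (ρ := 5) (u := 2 * π) (p := 1) (q := 2)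
      (x := π * m + t) (by linear_combination -2 * h2) (by ring)
    exact ⟨p, q, by linear_combination e - 4 * m * h2⟩
  · obtain ⟨p, q, e⟩ := h.two_squares_of_congr (ρ := 3) (u := π) (p := 1) (q := π)
      (x := π * m + t) (by linear_combination -1 * h2) (by linear_combination -1 * h2)
    exact ⟨p, q, by linear_combination e - 4 * m * h2⟩
  · obtain ⟨p, q, e⟩ := h.two_squares_of_congr (ρ := 15) (u := 7 * π) (p := 1 - 2 * π)
      (q := 2 + π) (x := π * (m - 1) + t) (by linear_combination -7 * h2)
      (by linear_combination -5 * h2)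
    exact ⟨p, q, by linear_combination e - 4 * (m - 1) * h2⟩

/-- Every element congruent to `1` modulo `2` is a sum of two squares. -/
lemma two_squares (h : IsModel R π) (z : R) : ∃ p q, 1 + 2 * z = p ^ 2 + q ^ 2 := by
  have h2 := h.sq
  obtain ⟨k, t, rfl⟩ := h.span z
  rcases even_or_odd t with ⟨t, rfl⟩ | ⟨t, rfl⟩
  · obtain ⟨p, q, e⟩ := h.two_squares_aux k (algebraMap ℤ_[2] R t)
    refine ⟨p, q, ?_⟩
    simp only [map_mul, map_ofNat]
    linear_combination e
  · -- Multiplication by `(1 + π)²` makes the coefficient of `2π` even; `(1 + π)(π - 1) = 1`.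
    obtain ⟨p, q, e⟩ := h.two_squares_aux (3 * k + 5 + 8 * t) (2 + algebraMap ℤ_[2] R (k + 3 * t))
    refine ⟨(π - 1) * p, (π - 1) * q, ?_⟩
    simp only [map_add, map_one, map_mul, map_ofNat] at e ⊢
    generalize algebraMap ℤ_[2] R k = k at *
    generalize algebraMap ℤ_[2] R t = t at *
    have hx : 1 + 2 * (k + (1 + 2 * t) * π) = (π - 1) ^ 2 * (p ^ 2 + q ^ 2) := by
      rw [← e]
      have h3 : (π - 1) ^ 2 = 3 - 2 * π := by linear_combination h2
      rw [h3]
      linear_combination (8 * (2 + k + 3 * t)) * h2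
    linear_combination hx

/-! ### Representations by four squares -/

/-- The order `ℤ₂ + 2R`: the elements congruent to `0` or `1` modulo `2`. It contains all sums of
squares. -/
def InS (x : R) : Prop := (∃ z, x = 2 * z) ∨ (∃ z, x = 1 + 2 * z)

lemma InS.add {R : Type*} [CommRing R] {x y : R} (hx : InS x) (hy : InS y) : InS (x + y) := by
  rcases hx with ⟨a, rfl⟩ | ⟨a, rfl⟩ <;> rcases hy with ⟨b, rfl⟩ | ⟨b, rfl⟩
  · exact .inl ⟨a + b, by ring⟩
  · exact .inr ⟨a + b, by ring⟩
  · exact .inr ⟨a + b, by ring⟩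
  · exact .inl ⟨1 + a + b, by ring⟩

lemma InS.mul {R : Type*} [CommRing R] {x y : R} (hx : InS x) (hy : InS y) : InS (x * y) := by
  rcases hx with ⟨a, rfl⟩ | ⟨a, rfl⟩
  · exact .inl ⟨a * y, by ring⟩
  · rcases hy with ⟨b, rfl⟩ | ⟨b, rfl⟩
    · exact .inl ⟨(1 + 2 * a) * b, by ring⟩
    · exact .inr ⟨a + b + 2 * a * b, by ring⟩

lemma InS.neg {R : Type*} [CommRing R] {x : R} (hx : InS x) : InS (-x) := by
  rcases hx with ⟨a, rfl⟩ | ⟨a, rfl⟩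
  · exact .inl ⟨-a, by ring⟩
  · exact .inr ⟨-1 - a, by ring⟩

lemma inS_sq (h : IsModel R π) (x : R) : InS (x ^ 2) := by
  rcases h.dichotomy x with ⟨y, rfl⟩ | ⟨y, rfl⟩
  · exact .inl ⟨y ^ 2, by linear_combination y ^ 2 * h.sq⟩
  · exact .inr ⟨π * y + y ^ 2, by linear_combination y ^ 2 * h.sq⟩

lemma inS_sum_sq (h : IsModel R π) {ι : Type*} (s : Finset ι) (a : ι → R) :
    InS (∑ i ∈ s, a i ^ 2) := by
  classical
  induction s using Finset.induction_on with
  | empty => exact .inl ⟨0, by simp⟩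
  | insert i s hi ih =>
    rw [Finset.sum_insert hi]
    exact (h.inS_sq _).add ih

/-- The form `α x² + 2 b x y + γ y²` is a sum of four squares of linear forms: its Gram matrix is
that of two vectors of `R⁴`. -/
def Rep (α b γ : R) : Prop := ∃ v w : Fin 4 → R,
  α = ∑ i, v i ^ 2 ∧ b = ∑ i, v i * w i ∧ γ = ∑ i, w i ^ 2

lemma Rep.symm {R : Type*} [CommRing R] {α b γ : R} : Rep α b γ → Rep γ b α := by
  rintro ⟨v, w, h1, h2, h3⟩
  exact ⟨w, v, h3, by simp only [h2, mul_comm], h1⟩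

/-- If `α` is a unit, the form is `α (x + c y)² + δ y²`. As `α = p² + q²`, the lattice of four
squares is `⟨α, α, 1, 1⟩`, and either `δ` or `δ - α` is a sum of two squares. -/
lemma rep_of_unit (h : IsModel R π) {b γ : R} (z : R) (hγ : InS γ) :
    Rep (1 + 2 * z) b γ := by
  obtain ⟨i, hi⟩ := h.exists_inv (π * z)
  have hi' : (1 + 2 * z) * i = 1 := by linear_combination hi - z * i * h.sq
  obtain ⟨p, q, hpq⟩ := h.two_squares z
  have hδ : InS (γ + -((b * i) ^ 2 * (1 + 2 * z))) :=
    hγ.add ((h.inS_sq _).mul (.inr ⟨z, rfl⟩)).neg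
  rcases hδ with ⟨w, hw⟩ | ⟨w, hw⟩
  · obtain ⟨r, s, hrs⟩ := h.two_squares (w - z - 1)
    refine ⟨![p, q, 0, 0], ![p * (b * i) - q, q * (b * i) + p, r, s], ?_, ?_, ?_⟩ <;>
      simp [Fin.sum_univ_four]
    · linear_combination hpq
    · linear_combination -b * hi' + b * i * hpq
    · linear_combination hw + hrs + (1 + (b * i) ^ 2) * hpq
  · obtain ⟨r, s, hrs⟩ := h.two_squares w
    refine ⟨![p, q, 0, 0], ![p * (b * i), q * (b * i), r, s], ?_, ?_, ?_⟩ <;>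
      simp [Fin.sum_univ_four]
    · linear_combination hpq
    · linear_combination -b * hi' + b * i * hpq
    · linear_combination hw + hrs + ((b * i) ^ 2) * hpq

/-- With `p² + q² = -1`, the vectors `e = (1, p, q, 0)`, `f = (1, -q, p, 0)` span a hyperbolic
plane, and `g = (0, 0, 0, 1)`, `k = (-1, q - p, -q - p, 0)` are orthogonal to it and to each other,
of norms `1` and `-1`. The vectors used are `e + a f` and `y e + (b - a y) f + u g + t k`. -/
lemma rep_of_hyperbolic (h : IsModel R π) {a b c : R} (y u t : R)
    (hut : 2 * (c - b * y + a * y ^ 2) = u ^ 2 - t ^ 2) : Rep (2 * a) b (2 * c) := by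
  obtain ⟨p, q, hpq⟩ := h.two_squares (-1)
  have e : p ^ 2 + q ^ 2 = -1 := by linear_combination -hpq
  refine ⟨![1 + a, p - a * q, q + a * p, 0],
    ![y + (b - a * y) - t, y * p - (b - a * y) * q + t * (q - p),
      y * q + (b - a * y) * p + t * (-q - p), u], ?_, ?_, ?_⟩ <;> simp [Fin.sum_univ_four]
  · linear_combination -(1 + a ^ 2) * e
  · linear_combination (-y - a * (b - a * y) + t * (1 + a)) * e
  · linear_combination hut + (-y ^ 2 - (b - a * y) ^ 2 - 2 * t ^ 2
      + 2 * t * (y + (b - a * y))) * e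

lemma rep_of_value_unit (h : IsModel R π) {a b c : R} (y m : R)
    (hm : c - b * y + a * y ^ 2 = 1 + π * m) : Rep (2 * a) b (2 * c) :=
  h.rep_of_hyperbolic y (π + m) m (by linear_combination 2 * hm - h.sq)

lemma rep_of_value_two (h : IsModel R π) {a b c : R} (y m : R)
    (hm : c - b * y + a * y ^ 2 = 2 * m) : Rep (2 * a) b (2 * c) :=
  h.rep_of_hyperbolic y (m + 1) (m - 1) (by linear_combination 2 * hm)

/-- Unless `a`, `b`, `c` all have valuation exactly one, one of the values `a`, `c`, `a - b + c` of
the form `a x² + b x y + c y²` is a unit or divisible by two. -/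
lemma rep_or_val_one (h : IsModel R π) (a b c : R) : Rep (2 * a) b (2 * c) ∨
    ∃ a' b' c', a = π * (1 + π * a') ∧ b = π * (1 + π * b') ∧ c = π * (1 + π * c') := by
  have h2 := h.sq
  rcases h.dichotomy c with ⟨c, rfl⟩ | ⟨c, rfl⟩
  swap
  · exact .inl (h.rep_of_value_unit 0 c (by ring))
  rcases h.dichotomy c with ⟨c, rfl⟩ | ⟨c, rfl⟩
  · exact .inl (h.rep_of_value_two 0 c (by linear_combination c * h2))
  rcases h.dichotomy a with ⟨a, rfl⟩ | ⟨a, rfl⟩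
  swap
  · exact .inl (h.rep_of_value_unit 0 a (by ring)).symm
  rcases h.dichotomy a with ⟨a, rfl⟩ | ⟨a, rfl⟩
  · exact .inl (h.rep_of_value_two 0 a (by linear_combination a * h2)).symm
  rcases h.dichotomy b with ⟨b, rfl⟩ | ⟨b, rfl⟩
  swap
  · exact .inl (h.rep_of_value_unit 1 (2 + π * a + π * c - b - π)
      (by linear_combination h2))
  rcases h.dichotomy b with ⟨b, rfl⟩ | ⟨b, rfl⟩
  · exact .inl (h.rep_of_value_two 1 (π + a + c - b)
      (by linear_combination (a + c - b) * h2))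
  exact .inr ⟨a, b, c, rfl, rfl, rfl⟩

/-! ### Forms with unit coefficients -/

lemma unit_mul {R : Type*} [CommRing R] {π x y : R} (hx : ∃ a, x = 1 + π * a) (hy : ∃ a, y = 1 + π * a) :
    ∃ a, x * y = 1 + π * a := by
  obtain ⟨a, rfl⟩ := hx
  obtain ⟨b, rfl⟩ := hy
  exact ⟨a + b + π * a * b, by ring⟩

lemma unit_inv (h : IsModel R π) {x : R} (hx : ∃ a, x = 1 + π * a) :
    ∃ i, x * i = 1 ∧ ∃ a, i = 1 + π * a := by
  obtain ⟨a, rfl⟩ := hx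
  obtain ⟨i, hi⟩ := h.exists_inv a
  exact ⟨i, hi, -i * a, by linear_combination hi⟩

/-- A form `a x² + b x y + c y²` with unit coefficients is equivalent to `x² + x y + y²`. -/
lemma equiv_of_units (h : IsModel R π) {a b c : R} (ha : ∃ a', a = 1 + π * a')
    (hb : ∃ b', b = 1 + π * b') (hc : ∃ c', c = 1 + π * c') :
    ∃ p q r s t : R, (p * s - q * r) * t = 1 ∧
      a * p ^ 2 + b * (p * r) + c * r ^ 2 = 1 ∧
      2 * a * (p * q) + b * (p * s + q * r) + 2 * c * (r * s) = 1 ∧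
      a * q ^ 2 + b * (q * s) + c * s ^ 2 = 1 := by
  have h2 := h.sq
  obtain ⟨i, hi, hiu⟩ := h.unit_inv hb
  -- Scaling `y` gives `a x² + x y + c₁ y²`.
  obtain ⟨c1, hc1⟩ : ∃ c1, c1 = c * (i * i) := ⟨_, rfl⟩
  have hc1u : ∃ c', c1 = 1 + π * c' := by
    rw [hc1]
    exact unit_mul hc (unit_mul hiu hiu)
  obtain ⟨j, hj, -⟩ := h.unit_inv hc1u
  obtain ⟨a', rfl⟩ := ha
  -- The vector `(1, y₀)` with `y₀ = k / c₁` has value one.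
  obtain ⟨k, hk⟩ := h.exists_sq_add (-(c1 * a'))
  -- In the basis `(1, y₀), (0, 1)` the form is `x² + (1 + 2k) x y + c₁ y²`; scale `y` again.
  obtain ⟨l, hl, hlu⟩ := h.unit_inv (x := 1 + 2 * k) ⟨π * k, by linear_combination -k * h2⟩
  obtain ⟨c2, hc2⟩ : ∃ c2, c2 = c1 * (l * l) := ⟨_, rfl⟩
  have hc2u : ∃ c', c2 = 1 + π * c' := by
    rw [hc2]
    exact unit_mul hc1u (unit_mul hlu hlu)
  obtain ⟨d, hd⟩ := hc2u
  obtain ⟨m, hm, -⟩ := h.unit_inv (x := 1 - 4 * c2)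
    ⟨-(2 * π * c2), by linear_combination 2 * c2 * h2⟩
  -- The vector `(-g, 1 + 2g)` completes `(1, 0)` to a basis with the wanted Gram matrix.
  obtain ⟨g, hg⟩ := h.exists_sq_add (d * m)
  have hg' : (g ^ 2 + g) * (1 - 4 * c2) = c2 - 1 := by
    linear_combination (1 - 4 * c2) * hg + π * d * hm - hd
  obtain ⟨n, hn, -⟩ := h.unit_inv (x := 1 + 2 * g) ⟨π * g, by linear_combination -g * h2⟩
  have e1 : (1 + π * a') + (k * j) + c1 * (k * j) ^ 2 = 1 := by
    linear_combination j * hk + (-π * a' + k ^ 2 * j) * hj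
  have n1 : (1 + π * a') * 1 ^ 2 + b * (1 * (i * (k * j))) + c * (i * (k * j)) ^ 2 = 1 := by
    linear_combination e1 + k * j * hi - (k * j) ^ 2 * hc1
  have n2 : b * i + 2 * c * (i * (i * (k * j))) = 1 + 2 * k := by
    linear_combination hi + 2 * k * hj - 2 * k * j * hc1
  refine ⟨1, -g, i * (k * j), -g * (i * (k * j)) + (1 + 2 * g) * l * i,
    n * (1 + 2 * k) * b, ?_, n1, ?_, ?_⟩
  · linear_combination (l * i * (1 + 2 * k) * b) * hn + (i * b) * hl + hi
  · linear_combination -2 * g * n1 + (1 + 2 * g) * l * n2 + (1 + 2 * g) * hl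
  · linear_combination g ^ 2 * n1 - g * ((1 + 2 * g) * l) * n2 - g * (1 + 2 * g) * hl
      - ((1 + 2 * g) * l) ^ 2 * hc1 - (1 + 2 * g) ^ 2 * hc2 - hg'

/-! ### The exceptional form -/

/-- Parities of the coordinates of a vector `c + d π` of `R⁴` whose norm is `2π` times an odd
number: the vector `c` has exactly two odd coordinates, so its second elementary symmetric function
`e₂` is odd. Here `Σ c² + 2 Σ d² = 0` yields that `Σ c` is even and that `e₂(c) ≡ Σ d`. -/
lemma parity (c d : Fin 4 → ℤ_[2]) (h1 : ∑ i, c i ^ 2 + 2 * ∑ i, d i ^ 2 = 0)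
    (h2 : PadicInt.toZMod (∑ i, c i * d i) = 1) :
    PadicInt.toZMod (∑ i, c i) = 0 ∧
    PadicInt.toZMod (c 0 * c 1 + c 0 * c 2 + c 0 * c 3 + c 1 * c 2 + c 1 * c 3 + c 2 * c 3) = 1 := by
  have two : PadicInt.toZMod (2 : ℤ_[2]) = 0 := by
    rw [map_ofNat]
    decide
  have bits1 : ∀ x : ZMod 2, x ^ 2 = x := by decide
  have hσ : PadicInt.toZMod (∑ i, c i) = 0 := by
    have := congrArg PadicInt.toZMod h1
    simp only [map_add, map_mul, two, zero_mul, add_zero, map_sum, map_pow, bits1, map_zero] at this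
    rw [map_sum]
    exact this
  refine ⟨hσ, ?_⟩
  obtain ⟨s, hs⟩ : ∃ s, ∑ i, c i = 2 * s := by
    rcases even_or_odd (∑ i, c i) with h | ⟨s, hs⟩
    · exact h
    · rw [hs] at hσ
      simp [two] at hσ
  have he : c 0 * c 1 + c 0 * c 2 + c 0 * c 3 + c 1 * c 2 + c 1 * c 3 + c 2 * c 3
      = ∑ i, d i ^ 2 + 2 * s ^ 2 := by
    simp only [Fin.sum_univ_four] at hs h1 ⊢
    have : (2 : ℤ_[2]) ≠ 0 := two_ne_zero
    apply mul_left_cancel₀ this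
    linear_combination (c 0 + c 1 + c 2 + c 3 + 2 * s) * hs - h1
  have he' := congrArg PadicInt.toZMod he
  simp only [Fin.sum_univ_four, map_add, map_mul, map_pow, two, zero_mul, add_zero, bits1]
    at he' hσ h2 ⊢
  generalize PadicInt.toZMod (c 0) = c0 at *
  generalize PadicInt.toZMod (c 1) = c1 at *
  generalize PadicInt.toZMod (c 2) = c2 at *
  generalize PadicInt.toZMod (c 3) = c3 at *
  generalize PadicInt.toZMod (d 0) = d0 at *
  generalize PadicInt.toZMod (d 1) = d1 at *
  generalize PadicInt.toZMod (d 2) = d2 at *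
  generalize PadicInt.toZMod (d 3) = d3 at *
  clear he h1 hs two bits1
  revert c0 c1 c2 c3 d0 d1 d2 d3
  decide

lemma coords_eq (h : IsModel R π) {c d c' d' : ℤ_[2]}
    (e : algebraMap ℤ_[2] R c + algebraMap ℤ_[2] R d * π
        = algebraMap ℤ_[2] R c' + algebraMap ℤ_[2] R d' * π) : c = c' ∧ d = d' := by
  have := h.indep (c - c') (d - d') (by
    simp only [map_sub]
    linear_combination e)
  exact ⟨sub_eq_zero.1 this.1, sub_eq_zero.1 this.2⟩

/-- The form `2π (x² + x y + y²)` is not a sum of four squares: two such vectors `v`, `w` and their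
sum `v + w` all have an odd `e₂`, whereas `e₂(c + c') ≡ e₂(c) + e₂(c') + (Σ c)(Σ c') - c · c'` is
even. -/
lemma not_rep (h : IsModel R π) : ¬ Rep (2 * π) π (2 * π) := by
  rintro ⟨v, w, hv, hvw, hw⟩
  choose c d hcd using fun i => h.span (v i)
  choose c' d' hcd' using fun i => h.span (w i)
  have k1 := h.coords_eq (c := ∑ i, c i ^ 2 + 2 * ∑ i, d i ^ 2) (d := 2 * ∑ i, c i * d i)
    (c' := 0) (d' := 2) (by
      simp only [map_add, map_mul, map_pow, map_ofNat, map_zero, Fin.sum_univ_four,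
        hcd] at hv ⊢
      linear_combination -hv - (algebraMap ℤ_[2] R (d 0) ^ 2 + algebraMap ℤ_[2] R (d 1) ^ 2 +
        algebraMap ℤ_[2] R (d 2) ^ 2 + algebraMap ℤ_[2] R (d 3) ^ 2) * h.sq)
  have k2 := h.coords_eq (c := ∑ i, c' i ^ 2 + 2 * ∑ i, d' i ^ 2) (d := 2 * ∑ i, c' i * d' i)
    (c' := 0) (d' := 2) (by
      simp only [map_add, map_mul, map_pow, map_ofNat, map_zero, Fin.sum_univ_four,
        hcd'] at hw ⊢
      linear_combination -hw - (algebraMap ℤ_[2] R (d' 0) ^ 2 + algebraMap ℤ_[2] R (d' 1) ^ 2 +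
        algebraMap ℤ_[2] R (d' 2) ^ 2 + algebraMap ℤ_[2] R (d' 3) ^ 2) * h.sq)
  have k3 := h.coords_eq (c := ∑ i, c i * c' i + 2 * ∑ i, d i * d' i)
    (d := ∑ i, (c i * d' i + c' i * d i)) (c' := 0) (d' := 1) (by
      simp only [map_add, map_mul, map_ofNat, map_zero, map_one,
        Fin.sum_univ_four, hcd, hcd'] at hvw ⊢
      linear_combination -hvw - (algebraMap ℤ_[2] R (d 0) * algebraMap ℤ_[2] R (d' 0) +
        algebraMap ℤ_[2] R (d 1) * algebraMap ℤ_[2] R (d' 1) +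
        algebraMap ℤ_[2] R (d 2) * algebraMap ℤ_[2] R (d' 2) +
        algebraMap ℤ_[2] R (d 3) * algebraMap ℤ_[2] R (d' 3)) * h.sq)
  obtain ⟨a1, a2⟩ := k1
  obtain ⟨b1, b2⟩ := k2
  obtain ⟨m1, m2⟩ := k3
  have a2' : ∑ i, c i * d i = 1 := mul_left_cancel₀ two_ne_zero (by rw [a2, mul_one])
  have b2' : ∑ i, c' i * d' i = 1 := mul_left_cancel₀ two_ne_zero (by rw [b2, mul_one])
  obtain ⟨p1, p2⟩ := parity c d a1 (by rw [a2', map_one])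
  obtain ⟨q1, q2⟩ := parity c' d' b1 (by rw [b2', map_one])
  obtain ⟨-, r2⟩ := parity (fun i => c i + c' i) (fun i => d i + d' i)
    (by
      simp only [Fin.sum_univ_four] at a1 b1 m1 ⊢
      linear_combination a1 + b1 + 2 * m1)
    (by
      have : ∑ i, (c i + c' i) * (d i + d' i) = 3 := by
        simp only [Fin.sum_univ_four] at a2' b2' m2 ⊢
        linear_combination a2' + b2' + m2
      rw [this, map_ofNat]
      decide)
  have m1' := congrArg PadicInt.toZMod m1
  have two : PadicInt.toZMod (2 : ℤ_[2]) = 0 := by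
    rw [map_ofNat]
    decide
  simp only [Fin.sum_univ_four, map_add, map_mul, two, zero_mul, add_zero, map_zero]
    at p1 p2 q1 q2 r2 m1'
  have key : (1 : ZMod 2) = 0 := by
    have h11 : (1 : ZMod 2) + 1 = 0 := by decide
    linear_combination -r2 + p2 + q2 - m1' + p1 * (PadicInt.toZMod (c' 0) +
      PadicInt.toZMod (c' 1) + PadicInt.toZMod (c' 2) + PadicInt.toZMod (c' 3)) + h11
  exact absurd key (by decide)

lemma Rep.of_equiv {R : Type*} [CommRing R] {α b γ : R} (hr : Rep α b γ) (p q r s : R) :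
    Rep (α * p ^ 2 + 2 * b * (p * r) + γ * r ^ 2)
      (α * (p * q) + b * (p * s + q * r) + γ * (r * s))
      (α * q ^ 2 + 2 * b * (q * s) + γ * s ^ 2) := by
  obtain ⟨v, w, rfl, rfl, rfl⟩ := hr
  refine ⟨fun i => p * v i + r * w i, fun i => q * v i + s * w i, ?_, ?_, ?_⟩ <;>
    simp only [Fin.sum_univ_four] <;> ring

/-- The theorem for the ring `R = ℤ₂[√2]`, for the form `α x² + 2 b x y + γ y²`. -/
lemma main (h : IsModel R π) {α b γ : R} (hα : InS α) (hγ : InS γ) :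
    ¬ Rep α b γ ↔ ∃ p q r s t : R, (p * s - q * r) * t = 1 ∧
      2 * π = α * p ^ 2 + 2 * b * (p * r) + γ * r ^ 2 ∧
      2 * π = 2 * α * (p * q) + 2 * b * (p * s + q * r) + 2 * γ * (r * s) ∧
      2 * π = α * q ^ 2 + 2 * b * (q * s) + γ * s ^ 2 := by
  constructor
  · intro hn
    rcases hα with ⟨a, rfl⟩ | ⟨a, rfl⟩
    swap
    · exact absurd (h.rep_of_unit a hγ) hn
    rcases hγ with ⟨c, rfl⟩ | ⟨c, rfl⟩
    swap
    · exact absurd (h.rep_of_unit c (.inl ⟨a, rfl⟩)).symm hn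
    rcases h.rep_or_val_one a b c with hr | ⟨a, b, c, rfl, rfl, rfl⟩
    · exact absurd hr hn
    obtain ⟨p, q, r, s, t, h0, h1, h2, h3⟩ :=
      h.equiv_of_units (a := 1 + π * a) (b := 1 + π * b) (c := 1 + π * c) ⟨a, rfl⟩ ⟨b, rfl⟩ ⟨c, rfl⟩
    refine ⟨p, q, r, s, t, h0, ?_, ?_, ?_⟩
    · linear_combination -2 * π * h1
    · linear_combination -2 * π * h2
    · linear_combination -2 * π * h3
  · rintro ⟨p, q, r, s, t, -, h1, h2, h3⟩ hr
    have hr' := hr.of_equiv p q r s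
    have h2' : π = α * (p * q) + b * (p * s + q * r) + γ * (r * s) := by
      generalize hx : α * (p * q) + b * (p * s + q * r) + γ * (r * s) = x
      have e : 2 * π = 2 * x := by linear_combination h2 + 2 * hx
      obtain ⟨c, d, rfl⟩ := h.span x
      obtain ⟨e1, e2⟩ := h.coords_eq (c := 0) (d := 2) (c' := 2 * c) (d' := 2 * d) (by
        simp only [map_mul, map_ofNat, map_zero]
        linear_combination e)
      have hc : c = 0 := mul_left_cancel₀ two_ne_zero (by rw [← e1, mul_zero])
      have hd : d = 1 := mul_left_cancel₀ two_ne_zero (by rw [← e2, mul_one])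
      rw [hc, hd, map_zero, map_one]
      ring
    rw [← h1, ← h2', ← h3] at hr'
    exact h.not_rep hr'

end IsModel

/-! ### The integral closure of `ℤ₂` in `ℚ₂(√2)` -/

/-- The valuations of `u²` and `2 v²` have different parities. -/
lemma norm_sq_ne (u v : ℚ_[2]) (hv : v ≠ 0) : ‖u ^ 2‖ ≠ ‖2 * v ^ 2‖ := by
  intro e
  have h2 : ‖(2 : ℚ_[2])‖ = 2⁻¹ := by simpa using (Padic.norm_p (p := 2))
  have hu : u ≠ 0 := by
    rintro rfl
    simp [hv] at e
  rw [norm_mul, norm_pow, norm_pow, h2, Padic.norm_eq_zpow_neg_valuation hu,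
    Padic.norm_eq_zpow_neg_valuation hv] at e
  push_cast at e
  rw [← zpow_natCast, ← zpow_natCast, ← zpow_mul, ← zpow_mul, ← zpow_neg_one,
    ← zpow_add₀ (two_ne_zero)] at e
  have := zpow_right_injective₀ (two_pos) (by norm_num : (2 : ℝ) ≠ 1) e
  push_cast at this
  omega

lemma norm_le_of_norm_form (u v : ℚ_[2]) (h : ‖u ^ 2 - 2 * v ^ 2‖ ≤ 1) : ‖u‖ ≤ 1 ∧ ‖v‖ ≤ 1 := by
  have h2 : ‖(2 : ℚ_[2])‖ = 2⁻¹ := by simpa using (Padic.norm_p (p := 2))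
  by_cases hv : v = 0
  · subst hv
    simp at h ⊢
    exact h
  have hm : ‖u ^ 2 + -(2 * v ^ 2)‖ = max ‖u ^ 2‖ ‖-(2 * v ^ 2)‖ :=
    Padic.add_eq_max_of_ne (by rw [norm_neg]; exact norm_sq_ne u v hv)
  rw [← sub_eq_add_neg] at hm
  rw [hm, norm_neg, max_le_iff, norm_pow, norm_mul, norm_pow, h2] at h
  refine ⟨by nlinarith [norm_nonneg u, h.1], ?_⟩
  -- `‖v‖² ≤ 2` forces `‖v‖ ≤ 1` because norms are integral powers of two.
  by_contra hlt
  rw [not_le] at hlt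
  rw [Padic.norm_eq_zpow_neg_valuation hv] at h hlt
  push_cast at h hlt
  have h1 : 0 < -v.valuation := by
    by_contra hneg
    exact absurd hlt (not_lt.2 (zpow_le_one_of_nonpos₀ (by norm_num) (not_lt.1 hneg)))
  have h3 : (2 : ℝ) ^ (1 : ℤ) ≤ 2 ^ (-v.valuation) :=
    zpow_le_zpow_right₀ (by norm_num) h1
  rw [zpow_one] at h3
  nlinarith [h.2]

variable {F : Type*} [Field F] [Algebra ℚ_[2] F]

lemma field_indep {σ : F} (hσ : σ * σ = 2) {u v : ℚ_[2]}
    (h : algebraMap ℚ_[2] F u + algebraMap ℚ_[2] F v * σ = 0) : u = 0 ∧ v = 0 := by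
  have e : algebraMap ℚ_[2] F (u ^ 2) = algebraMap ℚ_[2] F (2 * v ^ 2) := by
    simp only [map_pow, map_mul, map_ofNat]
    linear_combination (algebraMap ℚ_[2] F u - algebraMap ℚ_[2] F v * σ) * h
      + (algebraMap ℚ_[2] F v) ^ 2 * hσ
  have e' := (algebraMap ℚ_[2] F).injective e
  have hv : v = 0 := by
    by_contra hv
    exact norm_sq_ne u v hv (by rw [e'])
  subst hv
  exact ⟨by simpa using e', rfl⟩

lemma field_span {σ : F} (hσ : σ * σ = 2) (hgen : Algebra.adjoin ℚ_[2] {σ} = ⊤) (x : F) :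
    ∃ u v : ℚ_[2], x = algebraMap ℚ_[2] F u + algebraMap ℚ_[2] F v * σ := by
  have hx : x ∈ Algebra.adjoin ℚ_[2] {σ} := hgen ▸ Algebra.mem_top
  induction hx using Algebra.adjoin_induction with
  | mem x hx =>
    rw [Set.mem_singleton_iff] at hx
    exact ⟨0, 1, by simp [hx]⟩
  | algebraMap r => exact ⟨r, 0, by simp⟩
  | add x y _ _ hx hy =>
    obtain ⟨a, b, rfl⟩ := hx
    obtain ⟨c, d, rfl⟩ := hy
    exact ⟨a + c, b + d, by simp only [map_add]; ring⟩
  | mul x y _ _ hx hy =>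
    obtain ⟨a, b, rfl⟩ := hx
    obtain ⟨c, d, rfl⟩ := hy
    refine ⟨a * c + 2 * b * d, a * d + b * c, ?_⟩
    simp only [map_add, map_mul, map_ofNat]
    linear_combination (algebraMap ℚ_[2] F b * algebraMap ℚ_[2] F d) * hσ

/-- Polynomials over `ℚ₂` take conjugate values at conjugate arguments. -/
lemma aeval_conj {σ : F} (hσ : σ * σ = 2) (u v : ℚ_[2]) (P : Polynomial ℚ_[2]) :
    ∃ A B : ℚ_[2],
      Polynomial.aeval (algebraMap ℚ_[2] F u + algebraMap ℚ_[2] F v * σ) P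
        = algebraMap ℚ_[2] F A + algebraMap ℚ_[2] F B * σ ∧
      Polynomial.aeval (algebraMap ℚ_[2] F u - algebraMap ℚ_[2] F v * σ) P
        = algebraMap ℚ_[2] F A - algebraMap ℚ_[2] F B * σ := by
  induction P using Polynomial.induction_on with
  | C a => exact ⟨a, 0, by simp, by simp⟩
  | add p q hp hq =>
    obtain ⟨A, B, h1, h2⟩ := hp
    obtain ⟨C, D, h3, h4⟩ := hq
    refine ⟨A + C, B + D, ?_, ?_⟩
    · rw [map_add, h1, h3]
      simp only [map_add]
      ring
    · rw [map_add, h2, h4]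
      simp only [map_add]
      ring
  | monomial n a ih =>
    obtain ⟨A, B, h1, h2⟩ := ih
    refine ⟨A * u + 2 * B * v, A * v + B * u, ?_, ?_⟩
    · rw [pow_succ, ← mul_assoc, map_mul, h1, Polynomial.aeval_X]
      simp only [map_add, map_mul, map_ofNat]
      linear_combination (algebraMap ℚ_[2] F B * algebraMap ℚ_[2] F v) * hσ
    · rw [pow_succ, ← mul_assoc, map_mul, h2, Polynomial.aeval_X]
      simp only [map_add, map_mul, map_ofNat]
      linear_combination (algebraMap ℚ_[2] F B * algebraMap ℚ_[2] F v) * hσ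

variable [Algebra ℤ_[2] F] [IsScalarTower ℤ_[2] ℚ_[2] F]

/-- An integral element `u + v σ` has an integral conjugate, hence an integral norm `u² - 2 v²`, and
this bounds `u` and `v`. -/
lemma integral_span {σ : F} (hσ : σ * σ = 2) (hgen : Algebra.adjoin ℚ_[2] {σ} = ⊤) {x : F}
    (hx : IsIntegral ℤ_[2] x) :
    ∃ c d : ℤ_[2], x = algebraMap ℤ_[2] F c + algebraMap ℤ_[2] F d * σ := by
  obtain ⟨u, v, rfl⟩ := field_span hσ hgen x
  have hconj : IsIntegral ℤ_[2] (algebraMap ℚ_[2] F u - algebraMap ℚ_[2] F v * σ) := by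
    obtain ⟨P, hP, h0⟩ := hx
    refine ⟨P, hP, ?_⟩
    obtain ⟨A, B, h1, h2⟩ := aeval_conj hσ u v (P.map (algebraMap ℤ_[2] ℚ_[2]))
    rw [Polynomial.aeval_map_algebraMap, Polynomial.aeval_def] at h1 h2
    rw [h0] at h1
    obtain ⟨rfl, rfl⟩ := field_indep hσ h1.symm
    rw [h2]
    simp
  have hN : IsIntegral ℤ_[2] (algebraMap ℚ_[2] F (u ^ 2 - 2 * v ^ 2)) := by
    have e : algebraMap ℚ_[2] F (u ^ 2 - 2 * v ^ 2)
        = (algebraMap ℚ_[2] F u + algebraMap ℚ_[2] F v * σ)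
          * (algebraMap ℚ_[2] F u - algebraMap ℚ_[2] F v * σ) := by
      simp only [map_sub, map_pow, map_mul, map_ofNat]
      linear_combination (algebraMap ℚ_[2] F v) ^ 2 * hσ
    rw [e]
    exact hx.mul hconj
  rw [isIntegral_algebraMap_iff (algebraMap ℚ_[2] F).injective,
    IsIntegrallyClosed.isIntegral_iff] at hN
  obtain ⟨y, hy⟩ := hN
  obtain ⟨hu, hv⟩ := norm_le_of_norm_form u v (by rw [← hy]; exact y.2)
  obtain ⟨c, rfl⟩ : ∃ c : ℤ_[2], algebraMap ℤ_[2] ℚ_[2] c = u := ⟨⟨u, hu⟩, rfl⟩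
  obtain ⟨d, rfl⟩ : ∃ d : ℤ_[2], algebraMap ℤ_[2] ℚ_[2] d = v := ⟨⟨v, hv⟩, rfl⟩
  refine ⟨c, d, ?_⟩
  rw [IsScalarTower.algebraMap_apply ℤ_[2] ℚ_[2] F, IsScalarTower.algebraMap_apply ℤ_[2] ℚ_[2] F]

lemma isIntegral_sqrt {F : Type*} [Field F] [Algebra ℤ_[2] F] {σ : F} (hσ : σ * σ = 2) : IsIntegral ℤ_[2] σ := by
  refine IsIntegral.of_pow (n := 2) two_pos ?_
  rw [pow_two, hσ, ← map_ofNat (algebraMap ℤ_[2] F) 2]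
  exact isIntegral_algebraMap

lemma isModel {σ : F} (hσ : σ * σ = 2) (hgen : Algebra.adjoin ℚ_[2] {σ} = ⊤) :
    IsModel (integralClosure ℤ_[2] F) ⟨σ, isIntegral_sqrt hσ⟩ where
  sq := Subtype.ext hσ
  span := by
    rintro ⟨x, hx⟩
    obtain ⟨c, d, e⟩ := integral_span hσ hgen hx
    exact ⟨c, d, Subtype.ext e⟩
  indep := by
    intro c d e
    have e' : algebraMap ℤ_[2] F c + algebraMap ℤ_[2] F d * σ = 0 := congrArg Subtype.val e
    rw [IsScalarTower.algebraMap_apply ℤ_[2] ℚ_[2] F,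
      IsScalarTower.algebraMap_apply ℤ_[2] ℚ_[2] F] at e'
    obtain ⟨h1, h2⟩ := field_indep hσ e'
    exact ⟨Subtype.ext h1, Subtype.ext h2⟩

end SqrtTwo

/-- Let `F = ℚ₂(√2)` with valuation ring `O_F` (the integral closure of
`ℤ₂` in `F`).  Let `Q(x,y) = α x² + β x y + γ y²` be a binary quadratic form with
`α, β, γ ∈ O_F` which is a sum of `n` squares of linear forms over `O_F` for some `n ≥ 1`.
Then `Q` is NOT a sum of `4` squares of linear forms over `O_F` if and only if `Q` is
equivalent over `O_F` to the form `G(x,y) = 2√2 (x² + x y + y²)`. -/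
theorem not_sum_of_four_iff_equiv_G
    (F : Type*) [Field F] [Algebra ℚ_[2] F]
    [Algebra ℤ_[2] F] [IsScalarTower ℤ_[2] ℚ_[2] F]
    (sq2 : F) (hsq2 : sq2 * sq2 = 2)
    (hgen : Algebra.adjoin ℚ_[2] {sq2} = ⊤)
    (O : Set F) (hO : O = (integralClosure ℤ_[2] F : Set F))
    (α β γ : F) (hα : α ∈ O) (hβ : β ∈ O) (hγ : γ ∈ O)
    (n : ℕ) (hn : 0 < n) (hQ : IsSumOfLinSq O n α β γ) :
    ¬ IsSumOfLinSq O 4 α β γ ↔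
      AreEquivForms O α β γ (2 * sq2) (2 * sq2) (2 * sq2) := by

  subst hO
  have hM := SqrtTwo.isModel hsq2 hgen
  obtain ⟨a, b, ha, hb, rfl, rfl, rfl⟩ := hQ
  -- The coefficients and the half of the mixed one, as elements of the integral closure.
  let a' : Fin n → integralClosure ℤ_[2] F := fun i => ⟨a i, ha i⟩
  let b' : Fin n → integralClosure ℤ_[2] F := fun i => ⟨b i, hb i⟩
  have h2 : (2 : F) ≠ 0 := by
    rw [← map_ofNat (algebraMap ℚ_[2] F) 2]
    exact (map_ne_zero _).2 two_ne_zero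
  have main := hM.main (b := ∑ i, a' i * b' i) (hM.inS_sum_sq Finset.univ a')
    (hM.inS_sum_sq Finset.univ b')
  have hrep : IsSumOfLinSq (integralClosure ℤ_[2] F : Set F) 4 (∑ i, a i ^ 2)
      (2 * ∑ i, a i * b i) (∑ i, b i ^ 2) ↔
      SqrtTwo.IsModel.Rep (∑ i, a' i ^ 2) (∑ i, a' i * b' i) (∑ i, b' i ^ 2) := by
    constructor
    · rintro ⟨v, w, hv, hw, e1, e2, e3⟩
      refine ⟨fun i => ⟨v i, hv i⟩, fun i => ⟨w i, hw i⟩, ?_, ?_, ?_⟩ <;>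
        apply Subtype.ext <;> push_cast
      · exact e1
      · exact mul_left_cancel₀ h2 e2
      · exact e3
    · rintro ⟨v, w, e1, e2, e3⟩
      have e1' := congrArg Subtype.val e1
      have e2' := congrArg Subtype.val e2
      have e3' := congrArg Subtype.val e3
      push_cast at e1' e2' e3'
      exact ⟨fun i => v i, fun i => w i, fun i => (v i).2, fun i => (w i).2, e1',
        congrArg (2 * ·) e2', e3'⟩
  rw [hrep, main]
  constructor
  · rintro ⟨p, q, r, s, t, e0, e1, e2, e3⟩
    have e0' := congrArg Subtype.val e0
    have e1' := congrArg Subtype.val e1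
    have e2' := congrArg Subtype.val e2
    have e3' := congrArg Subtype.val e3
    push_cast at e0' e1' e2' e3'
    exact ⟨p, q, r, s, t, p.2, q.2, r.2, s.2, t.2, e0', e1', e2', e3'⟩
  · rintro ⟨p, q, r, s, t, hp, hq, hr, hs, ht, e0, e1, e2, e3⟩
    refine ⟨⟨p, hp⟩, ⟨q, hq⟩, ⟨r, hr⟩, ⟨s, hs⟩, ⟨t, ht⟩, ?_, ?_, ?_, ?_⟩ <;>
      apply Subtype.ext <;> push_cast
    · exact e0
    · exact e1
    · exact e2
    · exact e3
end

section
/- Let F = ℚ₂(√2) with valuation ring O_F. The binary quadratic form G(x,y) = 2√2(x² + xy + y²) is a sum of 5 squares of linear forms over O_F, but is not a sum of 4 squares of linear forms over O_F. -/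
open Polynomial

/-! ### The ring of integers of `ℚ₂(√2)` -/

/-- The valuation of `c²` is even and that of `2 d²` is odd. -/
lemma norm_sq_ne_norm_two_mul_sq {c d : ℚ_[2]} (hd : d ≠ 0) : ‖c ^ 2‖ ≠ ‖2 * d ^ 2‖ := by
  intro h
  have h2 : ‖(2 : ℚ_[2])‖ = (2 : ℝ) ^ (-1 : ℤ) := by
    have := Padic.norm_p (p := 2)
    norm_num at this ⊢
    exact this
  rcases eq_or_ne c 0 with rfl | hc
  · simp [hd] at h
  rw [norm_mul, norm_pow, norm_pow, h2, Padic.norm_eq_zpow_neg_valuation hc,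
    Padic.norm_eq_zpow_neg_valuation hd, ← zpow_natCast, ← zpow_natCast, ← zpow_mul,
    ← zpow_mul] at h
  push_cast at h
  rw [← zpow_add₀ (by norm_num)] at h
  have := zpow_right_injective₀ (by norm_num : (0 : ℝ) < 2) (by norm_num) h
  omega

lemma eq_zero_of_sq_eq_two_mul_sq {c d : ℚ_[2]} (h : c ^ 2 = 2 * d ^ 2) : d = 0 := by
  by_contra hd
  exact norm_sq_ne_norm_two_mul_sq hd (congrArg _ h)

lemma norm_le_one_of_norm_sq_sub {c d : ℚ_[2]} (hd : d ≠ 0) (h : ‖c ^ 2 - 2 * d ^ 2‖ ≤ 1) :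
    ‖c‖ ≤ 1 ∧ ‖d‖ ≤ 1 := by
  have hne := norm_sq_ne_norm_two_mul_sq (c := c) hd
  rw [sub_eq_add_neg, Padic.add_eq_max_of_ne (by rwa [norm_neg]), norm_neg] at h
  have h2 : ‖(2 : ℚ_[2])‖ = 2⁻¹ := by
    have := Padic.norm_p (p := 2)
    norm_num at this ⊢
    exact this
  obtain ⟨hc, hd'⟩ := max_le_iff.1 h
  rw [norm_pow] at hc
  rw [norm_mul, norm_pow, h2] at hd'
  refine ⟨by nlinarith [norm_nonneg c], ?_⟩
  -- `‖d‖² ≤ 2` suffices, because a norm greater than `1` is at least `2`.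
  by_contra hlt
  push Not at hlt
  rw [Padic.norm_eq_zpow_neg_valuation hd] at hlt hd'
  push_cast at hlt hd'
  have h1 : (1 : ℤ) ≤ -d.valuation := by
    by_contra hcon
    exact absurd hlt (not_lt.2 (zpow_le_one_of_nonpos₀ (by norm_num) (by omega)))
  have h3 : (2 : ℝ) ^ (1 : ℤ) ≤ 2 ^ (-d.valuation) := zpow_le_zpow_right₀ (by norm_num) h1
  rw [zpow_one] at h3
  nlinarith

section Coords

variable {F : Type*} [Field F] [Algebra ℚ_[2] F] {sq2 : F}

lemma exists_field_coords (hsq2 : sq2 * sq2 = 2) (hgen : Algebra.adjoin ℚ_[2] {sq2} = ⊤)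
    (x : F) : ∃ c d : ℚ_[2], x = algebraMap ℚ_[2] F c + algebraMap ℚ_[2] F d * sq2 := by
  have hx : x ∈ Algebra.adjoin ℚ_[2] {sq2} := hgen ▸ Algebra.mem_top
  induction hx using Algebra.adjoin_induction with
  | mem y hy => exact ⟨0, 1, by simpa using hy⟩
  | algebraMap r => exact ⟨r, 0, by simp⟩
  | add y z _ _ hy hz =>
    obtain ⟨c, d, rfl⟩ := hy
    obtain ⟨c', d', rfl⟩ := hz
    exact ⟨c + c', d + d', by simp only [map_add]; ring⟩
  | mul y z _ _ hy hz =>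
    obtain ⟨c, d, rfl⟩ := hy
    obtain ⟨c', d', rfl⟩ := hz
    refine ⟨c * c' + 2 * (d * d'), c * d' + d * c', ?_⟩
    simp only [map_add, map_mul, map_ofNat]
    linear_combination (algebraMap ℚ_[2] F d * algebraMap ℚ_[2] F d') * hsq2

lemma coords_eq_zero (hsq2 : sq2 * sq2 = 2) {c d : ℚ_[2]}
    (h : algebraMap ℚ_[2] F c + algebraMap ℚ_[2] F d * sq2 = 0) : c = 0 ∧ d = 0 := by
  have hsq : c ^ 2 = 2 * d ^ 2 := by
    apply (algebraMap ℚ_[2] F).injective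
    simp only [map_pow, map_mul, map_ofNat]
    linear_combination (algebraMap ℚ_[2] F c - algebraMap ℚ_[2] F d * sq2) * h
      + (algebraMap ℚ_[2] F d) ^ 2 * hsq2
  have hd := eq_zero_of_sq_eq_two_mul_sq hsq
  subst hd
  exact ⟨by simpa using hsq, rfl⟩

/-- For `d ≠ 0` the minimal polynomial of `c + d √2` over `ℚ₂` is `X² - 2 c X + (c² - 2 d²)`;
only its constant term is needed. -/
lemma minpoly_coeff_zero (hsq2 : sq2 * sq2 = 2) {c d : ℚ_[2]} (hd : d ≠ 0) :
    (minpoly ℚ_[2] (algebraMap ℚ_[2] F c + algebraMap ℚ_[2] F d * sq2)).coeff 0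
      = c ^ 2 - 2 * d ^ 2 := by
  set f : ℚ_[2][X] := X ^ 2 - C (2 * c) * X + C (c ^ 2 - 2 * d ^ 2) with hf
  have hdeg : f.natDegree = 2 := by rw [hf]; compute_degree!
  have hmonic : f.Monic := by rw [hf]; monicity!
  have hirr : Irreducible f := by
    rw [hmonic.irreducible_iff_roots_eq_zero_of_degree_le_three (by omega) (by omega)]
    refine Multiset.eq_zero_of_forall_notMem fun r hr => hd ?_
    have hr' := (mem_roots'.1 hr).2
    simp only [hf, IsRoot.def, eval_add, eval_sub, eval_mul, eval_pow, eval_X, eval_C] at hr'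
    exact eq_zero_of_sq_eq_two_mul_sq (c := r - c) (by linear_combination hr')
  rw [← minpoly.eq_of_irreducible_of_monic hirr ?_ hmonic]
  · simp [hf, coeff_zero_eq_eval_zero]
  · simp only [hf, map_add, map_sub, map_mul, map_pow, aeval_X, aeval_C, map_ofNat]
    linear_combination (algebraMap ℚ_[2] F d) ^ 2 * hsq2

/-- The integral closure of `ℤ₂` in `ℚ₂(√2)` is contained in `ℤ₂ + ℤ₂ √2`. -/
lemma exists_coords_of_isIntegral [Algebra ℤ_[2] F] [IsScalarTower ℤ_[2] ℚ_[2] F]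
    (hsq2 : sq2 * sq2 = 2)
    (hgen : Algebra.adjoin ℚ_[2] {sq2} = ⊤) {x : F} (hx : IsIntegral ℤ_[2] x) :
    ∃ p q : ℤ_[2], x = algebraMap ℚ_[2] F p + algebraMap ℚ_[2] F q * sq2 := by
  obtain ⟨c, d, rfl⟩ := exists_field_coords hsq2 hgen x
  rcases eq_or_ne d 0 with rfl | hd
  · have hc : IsIntegral ℤ_[2] c := by
      rw [← isIntegral_algebraMap_iff (algebraMap ℚ_[2] F).injective]
      simpa using hx
    obtain ⟨p, hp⟩ := IsIntegrallyClosed.isIntegral_iff.1 hc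
    exact ⟨p, 0, by rw [← hp]; simp⟩
  · have hmin := congrArg (fun f => coeff f 0)
      (minpoly.isIntegrallyClosed_eq_field_fractions' ℚ_[2] hx)
    simp only [minpoly_coeff_zero hsq2 hd, coeff_map] at hmin
    have hle : ‖c ^ 2 - 2 * d ^ 2‖ ≤ 1 := by
      rw [hmin]
      exact PadicInt.norm_le_one _
    obtain ⟨h1, h2⟩ := norm_le_one_of_norm_sq_sub hd hle
    exact ⟨⟨c, h1⟩, ⟨d, h2⟩, rfl⟩

lemma int_coords_ext (hsq2 : sq2 * sq2 = 2) {p q p' q' : ℤ_[2]}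
    (h : algebraMap ℚ_[2] F p + algebraMap ℚ_[2] F q * sq2
      = algebraMap ℚ_[2] F p' + algebraMap ℚ_[2] F q' * sq2) : p = p' ∧ q = q' := by
  have := coords_eq_zero (c := (p : ℚ_[2]) - p') (d := (q : ℚ_[2]) - q') hsq2
    (by simp only [map_sub]; linear_combination h)
  exact ⟨Subtype.ext (sub_eq_zero.1 this.1), Subtype.ext (sub_eq_zero.1 this.2)⟩

/-- The dot product of two vectors `p + q √2` and `r + s √2` in coordinates. -/
lemma sum_mul_coords (hsq2 : sq2 * sq2 = 2) {n : ℕ} (p q r s : Fin n → ℤ_[2]) :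
    ∑ i, (algebraMap ℚ_[2] F (p i) + algebraMap ℚ_[2] F (q i) * sq2)
        * (algebraMap ℚ_[2] F (r i) + algebraMap ℚ_[2] F (s i) * sq2)
      = algebraMap ℚ_[2] F ((∑ i, p i * r i + 2 * ∑ i, q i * s i : ℤ_[2]) : ℚ_[2])
        + algebraMap ℚ_[2] F ((∑ i, (p i * s i + q i * r i) : ℤ_[2]) : ℚ_[2]) * sq2 := by
  simp only [PadicInt.coe_add, PadicInt.coe_mul, PadicInt.coe_sum, map_add, map_mul, map_sum,
    Finset.mul_sum, Finset.sum_mul, ← Finset.sum_add_distrib]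
  refine Finset.sum_congr rfl fun i _ => ?_
  have h2 : algebraMap ℚ_[2] F ((2 : ℤ_[2]) : ℚ_[2]) = 2 := by
    rw [show ((2 : ℤ_[2]) : ℚ_[2]) = 2 from rfl, map_ofNat]
  rw [h2]
  linear_combination (algebraMap ℚ_[2] F (q i) * algebraMap ℚ_[2] F (s i)) * hsq2

end Coords

/-! ### The parity obstruction -/

/-- A pair `p, q` of parity vectors with `p·p + 2 q·q ≡ 0 (mod 4)` and `p·q` odd. -/
def ParityPair (p q : Fin 4 → Bool) : Prop :=
  (∑ i, (p i).toNat + 2 * ∑ i, (q i).toNat) % 4 = 0 ∧ (∑ i, (p i && q i).toNat) % 2 = 1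

instance (p q : Fin 4 → Bool) : Decidable (ParityPair p q) := by
  unfold ParityPair; infer_instance

set_option maxRecDepth 100000 in
set_option maxHeartbeats 4000000 in
/-- Only 24 pairs `(p, q)` satisfy `ParityPair`, so the order of the quantifiers keeps the
enumeration by `decide` short. -/
lemma no_parity_solution : ∀ p q : Fin 4 → Bool, ParityPair p q →
    ∀ r s : Fin 4 → Bool, ParityPair r s → (∑ i, (p i && r i).toNat) % 2 = 0 →
      (∑ i, ((p i && s i).toNat + (q i && r i).toNat)) % 2 = 0 := by
  decide

/-- The parity of a residue modulo `4`. -/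
def parityBit (z : ZMod 4) : Bool := decide (z.val % 2 = 1)

lemma sq_eq_parityBit : ∀ z : ZMod 4, z * z = ((parityBit z).toNat : ZMod 4) := by decide

lemma two_mul_mul_eq_parityBit : ∀ y z : ZMod 4,
    2 * (y * z) = 2 * ((parityBit y && parityBit z).toNat : ZMod 4) := by decide

lemma mod_two_eq_of_two_mul_cast {m n : ℕ} (h : (2 : ZMod 4) * m = 2 * n) :
    m % 2 = n % 2 := by
  have h' : ((2 * m : ℕ) : ZMod 4) = ((2 * n : ℕ) : ZMod 4) := by exact_mod_cast h
  rw [ZMod.natCast_eq_natCast_iff, Nat.ModEq] at h'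
  omega

/-- A dot product in `ZMod 4`, taken only modulo `2`, depends only on parities. -/
lemma two_mul_sum_eq {n : ℕ} (y z : Fin n → ZMod 4) :
    2 * ∑ i, y i * z i
      = 2 * ((∑ i, (parityBit (y i) && parityBit (z i)).toNat : ℕ) : ZMod 4) := by
  push_cast
  simp only [Finset.mul_sum, two_mul_mul_eq_parityBit]

lemma parityPair_of_eq {p q : Fin 4 → ZMod 4}
    (h0 : ∑ i, p i * p i + 2 * ∑ i, q i * q i = 0) (h1 : ∑ i, p i * q i = 1) :
    ParityPair (fun i => parityBit (p i)) (fun i => parityBit (q i)) := by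
  constructor
  · simp only [sq_eq_parityBit] at h0
    have h : ((∑ i, (parityBit (p i)).toNat + 2 * ∑ i, (parityBit (q i)).toNat : ℕ) : ZMod 4)
        = 0 := by
      push_cast
      exact h0
    exact Nat.mod_eq_zero_of_dvd ((ZMod.natCast_eq_zero_iff _ _).1 h)
  · refine mod_two_eq_of_two_mul_cast (n := 1) ?_
    rw [← two_mul_sum_eq, h1, Nat.cast_one]

lemma no_solution_mod_four (p q r s : Fin 4 → ZMod 4)
    (h1 : ∑ i, p i * p i + 2 * ∑ i, q i * q i = 0) (h2 : ∑ i, p i * q i = 1)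
    (h3 : ∑ i, r i * r i + 2 * ∑ i, s i * s i = 0) (h4 : ∑ i, r i * s i = 1)
    (h5 : ∑ i, p i * r i + 2 * ∑ i, q i * s i = 0)
    (h6 : ∑ i, (p i * s i + q i * r i) = 1) : False := by
  have hpr : (∑ i, (parityBit (p i) && parityBit (r i)).toNat) % 2 = 0 := by
    refine mod_two_eq_of_two_mul_cast (n := 0) ?_
    rw [← two_mul_sum_eq, Nat.cast_zero]
    linear_combination 2 * h5 - (∑ i, q i * s i) * (by decide : (4 : ZMod 4) = 0)
  have hodd : (∑ i, ((parityBit (p i) && parityBit (s i)).toNat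
      + (parityBit (q i) && parityBit (r i)).toNat)) % 2 = 1 := by
    refine mod_two_eq_of_two_mul_cast (n := 1) ?_
    rw [Finset.sum_add_distrib, Nat.cast_add, mul_add, ← two_mul_sum_eq, ← two_mul_sum_eq,
      ← mul_add, ← Finset.sum_add_distrib, h6, Nat.cast_one]
  have heven := no_parity_solution _ _ (parityPair_of_eq h1 h2) _ _ (parityPair_of_eq h3 h4) hpr
  omega

/-! ### The two halves of the theorem -/

lemma exists_root_sq_sub_add_two : ∃ w : ℤ_[2], w ^ 2 - w + 2 = 0 := by
  -- `0` is a simple root modulo `2`.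
  have h2 : ‖(2 : ℤ_[2])‖ < 1 := by
    have := PadicInt.norm_p (p := 2)
    norm_num at this ⊢
    rw [this]
    norm_num
  obtain ⟨w, hw, -⟩ := hensels_lemma (p := 2) (F := (X ^ 2 - X + C 2 : ℤ_[2][X])) (a := 0)
    (by simpa using h2)
  exact ⟨w, by simpa using hw⟩

lemma not_isSumOfLinSq_four {F : Type*} [Field F] [Algebra ℚ_[2] F]
    [Algebra ℤ_[2] F] [IsScalarTower ℤ_[2] ℚ_[2] F] {sq2 : F} (hsq2 : sq2 * sq2 = 2)
    (hgen : Algebra.adjoin ℚ_[2] {sq2} = ⊤) :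
    ¬ IsSumOfLinSq (integralClosure ℤ_[2] F : Set F) 4 (2 * sq2) (2 * sq2) (2 * sq2) := by
  rintro ⟨a, b, ha, hb, haa, hab, hbb⟩
  choose p q hpq using fun i => exists_coords_of_isIntegral hsq2 hgen (ha i)
  choose r s hrs using fun i => exists_coords_of_isIntegral hsq2 hgen (hb i)
  have h2 : (2 : F) ≠ 0 := by
    rw [← map_ofNat (algebraMap ℚ_[2] F) 2, Ne, map_eq_zero]
    exact two_ne_zero
  have hprod := mul_left_cancel₀ h2 hab
  simp only [hpq, hrs, sq, sum_mul_coords hsq2] at haa hprod hbb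
  have hcoord : ∀ m : ℤ_[2], algebraMap ℚ_[2] F ((0 : ℤ_[2]) : ℚ_[2])
      + algebraMap ℚ_[2] F (m : ℚ_[2]) * sq2 = algebraMap ℚ_[2] F (m : ℚ_[2]) * sq2 := by
    simp
  have e2 : algebraMap ℚ_[2] F ((2 : ℤ_[2]) : ℚ_[2]) = 2 := by
    rw [show ((2 : ℤ_[2]) : ℚ_[2]) = 2 from rfl, map_ofNat]
  have e1 : algebraMap ℚ_[2] F ((1 : ℤ_[2]) : ℚ_[2]) = 1 := by simp
  rw [← e2, ← hcoord] at haa hbb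
  obtain ⟨h1, h2'⟩ := int_coords_ext hsq2 haa
  obtain ⟨h3, h4'⟩ := int_coords_ext hsq2 hbb
  obtain ⟨h5, h6⟩ := int_coords_ext hsq2
    (((hcoord 1).trans (by rw [e1, one_mul])).trans hprod)
  -- The irrational part of `a·a` is `2 p·q`.
  have hhalf : ∀ y z : Fin 4 → ℤ_[2], 2 = ∑ i, (y i * z i + z i * y i) →
      ∑ i, y i * z i = 1 := by
    intro y z h
    apply mul_left_cancel₀ (two_ne_zero : (2 : ℤ_[2]) ≠ 0)
    rw [mul_one, Finset.mul_sum]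
    refine Eq.trans (Finset.sum_congr rfl fun i _ => ?_) h.symm
    ring
  have h2 := hhalf p q h2'
  have h4 := hhalf r s h4'
  let φ : ℤ_[2] →+* ZMod 4 := PadicInt.toZModPow 2
  refine no_solution_mod_four (fun i => φ (p i)) (fun i => φ (q i)) (fun i => φ (r i))
    (fun i => φ (s i)) ?_ ?_ ?_ ?_ ?_ ?_
  · simpa only [map_add, map_mul, map_sum, map_ofNat, map_zero] using congrArg φ h1.symm
  · simpa only [map_mul, map_sum, map_one] using congrArg φ h2
  · simpa only [map_add, map_mul, map_sum, map_ofNat, map_zero] using congrArg φ h3.symm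
  · simpa only [map_mul, map_sum, map_one] using congrArg φ h4
  · simpa only [map_add, map_mul, map_sum, map_ofNat, map_zero] using congrArg φ h5.symm
  · simpa only [map_add, map_mul, map_sum, map_one] using congrArg φ h6.symm

/-- Let `F = ℚ₂(√2)` with valuation ring `O_F` (the integral closure of
`ℤ₂` in `F`).  The binary quadratic form `G(x,y) = 2√2 (x² + x y + y²)` is a sum of `5`
squares of linear forms over `O_F`, but it is not a sum of `4` squares of linear forms
over `O_F`. -/
theorem G_sum_of_five_not_four
    (F : Type*) [Field F] [Algebra ℚ_[2] F]
    [Algebra ℤ_[2] F] [IsScalarTower ℤ_[2] ℚ_[2] F]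
    (sq2 : F) (hsq2 : sq2 * sq2 = 2)
    (hgen : Algebra.adjoin ℚ_[2] {sq2} = ⊤)
    (O : Set F) (hO : O = (integralClosure ℤ_[2] F : Set F)) :
    IsSumOfLinSq O 5 (2 * sq2) (2 * sq2) (2 * sq2) ∧
      ¬ IsSumOfLinSq O 4 (2 * sq2) (2 * sq2) (2 * sq2) := by
  subst hO
  refine ⟨?_, not_isSumOfLinSq_four hsq2 hgen⟩
  obtain ⟨w, hw⟩ := exists_root_sq_sub_add_two
  have hwF : algebraMap ℤ_[2] F w ^ 2 - algebraMap ℤ_[2] F w + 2 = 0 := by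
    simpa [map_ofNat] using congrArg (algebraMap ℤ_[2] F) hw
  have hvO : algebraMap ℤ_[2] F w ∈ integralClosure ℤ_[2] F := Subalgebra.algebraMap_mem _ w
  have hπO : sq2 ∈ integralClosure ℤ_[2] F := by
    refine ⟨X ^ 2 - C 2, by monicity!, ?_⟩
    rw [eval₂_sub, eval₂_X_pow, eval₂_C, map_ofNat, sq, hsq2, sub_self]
  generalize algebraMap ℤ_[2] F w = v at hwF hvO
  have h1 : (1 : F) ∈ integralClosure ℤ_[2] F := one_mem _
  have h0 : (0 : F) ∈ integralClosure ℤ_[2] F := zero_mem _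
  refine ⟨![0, 0, v, 1 - v, 1 + sq2], ![sq2 * v - sq2 - 1, - 1 - sq2 * v, sq2, sq2, 0],
    ?_, ?_, ?_, ?_, ?_⟩
  · intro i
    fin_cases i
    exacts [h0, h0, hvO, sub_mem h1 hvO, add_mem h1 hπO]
  · intro i
    fin_cases i
    exacts [sub_mem (sub_mem (mul_mem hπO hvO) hπO) h1,
      sub_mem (neg_mem h1) (mul_mem hπO hvO), hπO, hπO, h0]
  · simp [Fin.sum_univ_five]
    linear_combination - 2 * hwF - hsq2
  · simp [Fin.sum_univ_five, - mul_eq_mul_left_iff]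
    ring
  · simp [Fin.sum_univ_five]
    linear_combination (- 2 * v ^ 2 + 2 * v - 3) * hsq2 - 4 * hwF
end

section
/- Let F = ℚ₂(√2), and let b₁, b₂ ∈ F^× with S₁ = ord(b₁) and S₂ = ord(b₂). Then the following five conditions hold simultaneously: (1) S₁ ≥ −S₂ > 0; (2) d(−b₁) ≥ 2 − S₁ and d(−b₁b₂) ≥ 2 − S₂; (3) d(−b₁) + d(−b₁b₂) > 4 + S₂; (4) 2·d(−b₁b₂) > 4 + S₁; (5) there do NOT exist vectors u, v ∈ F³ with u₁² + u₂² + u₃² = b₁, v₁² + v₂² + v₃² = b₂ and u₁v₁ + u₂v₂ + u₃v₃ = 0; if and only if S₁ = 3, S₂ = −1 and d(−b₁b₂) = 4. -/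
/-! Write `D = -b₁b₂`. The space `[1,1,1]` is isotropic over `F = ℚ₂(√2)` (because `-1` is a sum
of two squares), hence is a hyperbolic plane plus `[-1]`, and `[b₁, b₂]` is represented by it
exactly when `-b₁` is a norm from `F(√D)`. The norm side is only needed in two cases:

* `D` is a square: `[b₁, b₂]` is a hyperbolic plane and is represented
  (`IsDyadicSetting.represented`);
* `d(D) = 4`: `F(√D)/F` is unramified, and `-b₁` is a norm iff `ord b₁` is even
  (`IsDyadicSetting.represented_of_even`, `IsDyadicSetting.not_represented_of_odd`).

For a nonsquare `c`, `d(c)` is the maximum of `ord (c - x²) - ord c` over `x`. It is at most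
`4 = ord 4` (`IsDyadicSetting.isSquare_of_lt`), and it is `0` when `ord c` is odd. Conditions
(1), (2) force `d(D) ≥ 3`, so `S₁ + S₂` is even. If `d(D) = 3`, conditions (1), (2), (4) give
`S₂ = -1`, `S₁ = 1`, against `d(-b₁) = 0 ≥ 2 - S₁`. If `d(D) = 4`, they leave
`(S₁, S₂) = (2, -2)`, excluded by (5), and `S₂ = -1` with `S₁ ∈ {1, 3}`, where again
`d(-b₁) = 0 ≥ 2 - S₁` excludes `S₁ = 1`.

All of this uses only the properties of `F` in `IsDyadicSetting`; the essential one is that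
`X² + X = c` is solvable for `c` in the maximal ideal, which comes from Hensel's lemma over
`ℤ₂` after eliminating one coordinate (`exists_root`). The hypotheses on `ord` are reduced to
`IsDyadicSetting` in `exists_setting`. -/

/-- The order of relative quadratic defect of `c`, with respect to a normalized valuation
`ord` on a field `F` (the valuation ring being `{x | 0 ≤ ord x}`):
`d(c) = min { ord (c⁻¹ * z) | z ∈ ⋂_{x ∈ F} (c - x²)·O_F }`, which equals `⊤ = ∞` when the
intersection is the zero ideal. -/
noncomputable def quadDefect {F : Type*} [Field F] (ord : F → WithTop ℤ) (c : F) :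
    WithTop ℤ :=
  sInf {v : WithTop ℤ | ∃ z : F,
    (∀ x : F, ∃ t : F, 0 ≤ ord t ∧ z = (c - x ^ 2) * t) ∧ v = ord (c⁻¹ * z)}

/-! ### Integer-valued valuations and the local input -/

/-- A discrete valuation of a field, as an integer-valued function whose value at `0`
is irrelevant: all laws are restricted to nonzero elements. -/
structure IsIntVal {F : Type*} [Field F] (o : F → ℤ) : Prop where
  mul : ∀ x y : F, x ≠ 0 → y ≠ 0 → o (x * y) = o x + o y
  add : ∀ x y : F, x ≠ 0 → y ≠ 0 → x + y ≠ 0 → min (o x) (o y) ≤ o (x + y)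

namespace IsIntVal

variable {F : Type*} [Field F] {o : F → ℤ}

lemma one (h : IsIntVal o) : o 1 = 0 := by
  have := h.mul 1 1 one_ne_zero one_ne_zero
  rw [mul_one] at this
  omega

lemma neg (h : IsIntVal o) (x : F) : o (-x) = o x := by
  by_cases hx : x = 0
  · simp [hx]
  have h1 := h.mul (-1) (-1) (by simp) (by simp)
  have h2 := h.mul (-1) x (by simp) hx
  rw [neg_mul_neg, mul_one, h.one] at h1
  rw [neg_one_mul] at h2
  omega

lemma sq (h : IsIntVal o) {x : F} (hx : x ≠ 0) : o (x ^ 2) = 2 * o x := by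
  rw [pow_two, h.mul x x hx hx]
  omega

lemma div (h : IsIntVal o) {x y : F} (hx : x ≠ 0) (hy : y ≠ 0) : o (x / y) = o x - o y := by
  have := h.mul (x / y) y (div_ne_zero hx hy) hy
  rw [div_mul_cancel₀ x hy] at this
  omega

lemma sub (h : IsIntVal o) {x y : F} (hx : x ≠ 0) (hy : y ≠ 0) (hxy : x - y ≠ 0) :
    min (o x) (o y) ≤ o (x - y) := by
  have := h.add x (-y) hx (neg_ne_zero.2 hy) (by rwa [← sub_eq_add_neg])
  rwa [h.neg, ← sub_eq_add_neg] at this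

lemma add_of_lt (h : IsIntVal o) {x y : F} (hx : x ≠ 0) (hy : y ≠ 0) (hlt : o x < o y) :
    x + y ≠ 0 ∧ o (x + y) = o x := by
  have h0 : x + y ≠ 0 := by
    intro h0
    rw [eq_neg_of_add_eq_zero_left h0, h.neg] at hlt
    exact lt_irrefl _ hlt
  refine ⟨h0, ?_⟩
  have h1 := h.add x y hx hy h0
  have h2 := h.sub h0 hy (by simpa using hx)
  rw [add_sub_cancel_right] at h2
  omega

lemma sub_of_lt (h : IsIntVal o) {x y : F} (hx : x ≠ 0) (hy : y ≠ 0) (hlt : o x < o y) :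
    x - y ≠ 0 ∧ o (x - y) = o x := by
  rw [sub_eq_add_neg]
  exact h.add_of_lt hx (neg_ne_zero.2 hy) (by rwa [h.neg])

lemma sub_comm (h : IsIntVal o) (x y : F) : o (x - y) = o (y - x) := by
  rw [← neg_sub, h.neg]

end IsIntVal

/-- The properties of `ℚ₂(√2)` on which the argument rests: the valuation is normalized with
`ord 2 = 2` and `π² = 2`, the residue field is `𝔽₂`, and Artin–Schreier equations
`X² + X = c` with `c` in the maximal ideal are solvable. -/
structure IsDyadicSetting {F : Type*} [Field F] (o : F → ℤ) (π : F) : Prop extends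
    IsIntVal o where
  two_ne : (2 : F) ≠ 0
  pi_sq : π * π = 2
  o_pi : o π = 1
  residue : ∀ x : F, x ≠ 0 → o x = 0 → x - 1 ≠ 0 → 0 < o (x - 1)
  artin_schreier : ∀ c : F, (c ≠ 0 → 0 < o c) → ∃ X : F, X ^ 2 + X = c

namespace IsDyadicSetting

variable {F : Type*} [Field F] {o : F → ℤ} {π : F}

lemma pi_ne (h : IsDyadicSetting o π) : π ≠ 0 := by
  rintro rfl
  exact h.two_ne (by rw [← h.pi_sq, mul_zero])

lemma o_two (h : IsDyadicSetting o π) : o 2 = 2 := by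
  rw [← h.pi_sq, h.mul π π h.pi_ne h.pi_ne, h.o_pi]
  rfl

lemma four_ne (h : IsDyadicSetting o π) : (4 : F) ≠ 0 := by
  have : (4 : F) = 2 * 2 := by norm_num
  rw [this]
  exact mul_ne_zero h.two_ne h.two_ne

lemma o_four (h : IsDyadicSetting o π) : o 4 = 4 := by
  have : (4 : F) = 2 * 2 := by norm_num
  rw [this, h.mul 2 2 h.two_ne h.two_ne, h.o_two]
  rfl

/-- Since the residue field is `𝔽₂`, a sum of two units lies in the maximal ideal. -/
lemma unit_add_unit (h : IsDyadicSetting o π) {x y : F} (hx : x ≠ 0) (hy : y ≠ 0)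
    (ox : o x = 0) (oy : o y = 0) (hxy : x + y ≠ 0) : 0 < o (x + y) := by
  have key : x / (-y) - 1 ≠ 0 ∧ x + y = (-y) * (x / (-y) - 1) := by
    have e : x + y = (-y) * (x / (-y) - 1) := by field_simp; ring
    refine ⟨fun h0 => hxy ?_, e⟩
    rw [e, h0, mul_zero]
  have h1 := h.residue (x / (-y)) (div_ne_zero hx (neg_ne_zero.2 hy))
    (by rw [h.div hx (neg_ne_zero.2 hy), h.neg]; omega) key.1
  rw [key.2, h.mul _ _ (neg_ne_zero.2 hy) key.1, h.neg]
  omega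

/-! ### Sums of three squares -/

/-- `-1` is a sum of two squares: `-7 = s²` gives `(s² + 1) * (2 + 4) = -36`, and the left
side is a sum of two squares by Brahmagupta's identity. -/
lemma exists_neg_one_eq (h : IsDyadicSetting o π) : ∃ x y : F, x ^ 2 + y ^ 2 = -1 := by
  obtain ⟨X, hX⟩ := h.artin_schreier (-2) fun _ => by rw [h.neg, h.o_two]; norm_num
  have hs : (1 + 2 * X) ^ 2 = -7 := by linear_combination 4 * hX
  generalize 1 + 2 * X = s at hs
  by_cases h3 : (3 : F) = 0
  · -- in characteristic 3 one has `-1 = 1 + 1`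
    exact ⟨1, 1, by linear_combination h3⟩
  have h6 : (6 : F) ≠ 0 := by
    have : (6 : F) = 2 * 3 := by norm_num
    rw [this]
    exact mul_ne_zero h.two_ne h3
  refine ⟨(2 * s + π) / 6, (π * s - 2) / 6, ?_⟩
  field_simp
  have hp := h.pi_sq
  linear_combination (s ^ 2 + 1) * hp + 6 * hs

/-- `[1,1,1]` is a hyperbolic plane plus `[-1]`; the complement in it of a vector of norm
`b₁` is `[-b₁, -1]`, so `[b₁, b₂]` is represented as soon as `[-b₁, -1]` represents `b₂`. -/
lemma represented (h : IsDyadicSetting o π) {b₁ b₂ α β : F}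
    (hb : b₂ = -b₁ * α ^ 2 - β ^ 2) :
    ∃ u v : Fin 3 → F,
      (∑ i, u i ^ 2) = b₁ ∧ (∑ i, v i ^ 2) = b₂ ∧ (∑ i, u i * v i) = 0 := by
  obtain ⟨x, y, hxy⟩ := h.exists_neg_one_eq
  have h2 := h.two_ne
  -- hyperbolic pair `e = (1, x, y)`, `f = (1, -x, -y) / 2`, and `g = (0, y, -x)` of norm `-1`;
  -- `u = e + (b₁/2) f` and `v = α (e - (b₁/2) f) + β g`, where `b₁ = 4 c`
  obtain ⟨c, rfl⟩ : ∃ c, b₁ = 4 * c := ⟨b₁ / 4, by have := h.four_ne; field_simp⟩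
  refine ⟨![1 + c, x * (1 - c), y * (1 - c)],
    ![α * (1 - c), α * x * (1 + c) + β * y, α * y * (1 + c) - β * x], ?_, ?_, ?_⟩
  · simp [Fin.sum_univ_three]
    linear_combination (1 - c) ^ 2 * hxy
  · simp [Fin.sum_univ_three]
    rw [hb]
    linear_combination (α ^ 2 * (1 + c) ^ 2 + β ^ 2) * hxy
  · simp [Fin.sum_univ_three]
    linear_combination (α * (1 - c ^ 2)) * hxy

/-- Conversely, a representation of `[b₁, b₂]` by the isotropic space `[1,1,1]` makes
`[b₁, b₂, b₁ b₂]` isotropic: expand an isotropic vector in the orthogonal basis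
`u, v, u × v`. -/
lemma isotropic_of_represented (h : IsDyadicSetting o π) {b₁ b₂ : F} (hb₁ : b₁ ≠ 0)
    (hb₂ : b₂ ≠ 0) {u v : Fin 3 → F} (hu : (∑ i, u i ^ 2) = b₁) (hv : (∑ i, v i ^ 2) = b₂)
    (huv : (∑ i, u i * v i) = 0) :
    ∃ A B C : F, ¬ (A = 0 ∧ B = 0 ∧ C = 0) ∧ b₂ * A ^ 2 + b₁ * B ^ 2 + C ^ 2 = 0 := by
  obtain ⟨x, y, hxy⟩ := h.exists_neg_one_eq
  simp only [Fin.sum_univ_three] at hu hv huv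
  generalize u 0 = u₀, u 1 = u₁, u 2 = u₂, v 0 = v₀, v 1 = v₁, v 2 = v₂ at hu hv huv
  refine ⟨u₀ + x * u₁ + y * u₂, v₀ + x * v₁ + y * v₂,
    (u₁ * v₂ - u₂ * v₁) + x * (u₂ * v₀ - u₀ * v₂) + y * (u₀ * v₁ - u₁ * v₀), ?_, ?_⟩
  · rintro ⟨hA, hB, hC⟩
    -- `b₁b₂` times the first coordinate `1` of the isotropic vector, expanded in `u, v, u × v`
    refine mul_ne_zero hb₁ hb₂ ?_
    subst hu hv
    linear_combination (u₀ * v₀ + u₁ * v₁ + u₂ * v₂) * huv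
      + ((v₀ ^ 2 + v₁ ^ 2 + v₂ ^ 2) * u₀ - (u₀ * v₀ + u₁ * v₁ + u₂ * v₂) * v₀) * hA
      + ((u₀ ^ 2 + u₁ ^ 2 + u₂ ^ 2) * v₀ - (u₀ * v₀ + u₁ * v₁ + u₂ * v₂) * u₀) * hB
      + (u₁ * v₂ - u₂ * v₁) * hC
  · subst hu hv
    linear_combination ((u₀ ^ 2 + u₁ ^ 2 + u₂ ^ 2) * (v₀ ^ 2 + v₁ ^ 2 + v₂ ^ 2)
        - (u₀ * v₀ + u₁ * v₁ + u₂ * v₂) ^ 2) * hxy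
      + 2 * (u₀ + x * u₁ + y * u₂) * (v₀ + x * v₁ + y * v₂) * huv

/-! ### Approximation by squares -/

/-- A nonzero element with a relative approximation by a square beyond `ord 4 = 4` is a
square. -/
lemma isSquare_of_lt (h : IsDyadicSetting o π) {c y : F} (hc : c ≠ 0)
    (hy : o c + 4 < o (c - y ^ 2)) : IsSquare c := by
  by_cases h0 : c - y ^ 2 = 0
  · exact ⟨y, by linear_combination h0⟩
  -- strict approximation forces `ord y² = ord c`
  have hoy : y ^ 2 ≠ 0 ∧ o (y ^ 2) = o c := by
    have := h.sub_of_lt hc h0 (by omega)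
    rwa [sub_sub_cancel] at this
  have hy0 : y ≠ 0 := fun hy0 => hoy.1 (by simp [hy0])
  have h4y : 4 * y ^ 2 ≠ 0 := mul_ne_zero h.four_ne hoy.1
  -- write `c = y² (1 + 4ρ) = (y (1 + 2X))²` with `X² + X = ρ`
  obtain ⟨X, hX⟩ := h.artin_schreier ((c - y ^ 2) / (4 * y ^ 2)) fun _ => by
    rw [h.div h0 h4y, h.mul _ _ h.four_ne hoy.1, h.o_four]
    omega
  rw [eq_div_iff h4y] at hX
  exact ⟨y * (1 + 2 * X), by linear_combination -hX⟩

lemma sub_sq_of_odd (h : IsDyadicSetting o π) {c : F} (hc : c ≠ 0) (hodd : Odd (o c)) (y : F) :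
    c - y ^ 2 ≠ 0 ∧ o (c - y ^ 2) ≤ o c := by
  by_cases hy : y = 0
  · simp [hy, hc]
  have hy2 := h.sq hy
  have hy0 : y ^ 2 ≠ 0 := pow_ne_zero 2 hy
  obtain ⟨k, hk⟩ := hodd
  rcases lt_or_gt_of_ne (show o c ≠ o (y ^ 2) by omega) with hlt | hlt
  · obtain ⟨h1, h2⟩ := h.sub_of_lt hc hy0 hlt
    exact ⟨h1, h2.le⟩
  · obtain ⟨h1, h2⟩ := h.sub_of_lt hy0 hc hlt
    rw [h.sub_comm, h2]
    exact ⟨fun h3 => h1 (by linear_combination -h3), hlt.le⟩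

/-- For a nonsquare the best approximation by squares exists. -/
lemma exists_best (h : IsDyadicSetting o π) {c : F} (hc : ¬ IsSquare c) :
    ∃ (n : ℤ) (y : F), 0 ≤ n ∧ n ≤ 4 ∧ o (c - y ^ 2) = o c + n ∧
      ∀ x, o (c - x ^ 2) ≤ o c + n := by
  have hc0 : c ≠ 0 := by rintro rfl; exact hc (IsSquare.zero)
  obtain ⟨m, ⟨y, hy⟩, hm⟩ := Int.exists_greatest_of_bdd
    (P := fun m => ∃ y : F, o (c - y ^ 2) = m)
    ⟨o c + 4, by
      rintro _ ⟨y, rfl⟩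
      by_contra! hlt
      exact hc (h.isSquare_of_lt hc0 hlt)⟩ ⟨_, 0, rfl⟩
  refine ⟨m - o c, y, ?_, ?_, by omega, fun x => ?_⟩
  · have := hm _ ⟨0, rfl⟩
    simp at this
    omega
  · by_contra! hlt
    exact hc (h.isSquare_of_lt (y := y) hc0 (by omega))
  · have := hm _ ⟨x, rfl⟩
    omega

/-- If the relative defect of `c` is `4`, then `F(√c)/F` is unramified: the values
`c - x²` of its norm form all have even order. -/
lemma even_of_best_four (h : IsDyadicSetting o π) {c y : F} (hc : ¬ IsSquare c)
    (hy : o (c - y ^ 2) = o c + 4) (hmax : ∀ x, o (c - x ^ 2) ≤ o c + 4) (x : F) :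
    Even (o (c - x ^ 2)) := by
  have hc0 : c ≠ 0 := by rintro rfl; exact hc (IsSquare.zero)
  have hne : ∀ x, c - x ^ 2 ≠ 0 := fun x hx => hc ⟨x, by linear_combination hx⟩
  have hoy : y ^ 2 ≠ 0 ∧ o (y ^ 2) = o c := by
    have := h.sub_of_lt hc0 (hne y) (by omega)
    rwa [sub_sub_cancel] at this
  have hy0 : y ≠ 0 := fun hy0 => hoy.1 (by simp [hy0])
  have hy2 := h.sq hy0
  by_cases ht : x - y = 0
  · rw [sub_eq_zero.1 ht, hy]
    exact ⟨o y + 2, by omega⟩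
  -- with `t = x - y`: `c - x² = (c - y²) - t² - 2 y t`
  have ht2 := h.sq ht
  have ht2' : (x - y) ^ 2 ≠ 0 := pow_ne_zero 2 ht
  have h2y : 2 * y ≠ 0 := mul_ne_zero h.two_ne hy0
  have h2yt : 2 * y * (x - y) ≠ 0 := mul_ne_zero h2y ht
  have o2yt : o (2 * y * (x - y)) = 2 + o y + o (x - y) := by
    rw [h.mul _ _ h2y ht, h.mul _ _ h.two_ne hy0, h.o_two]
  rcases lt_or_ge (o (x - y)) (o y + 2) with hlt | hge
  · obtain ⟨h1, h2⟩ := h.add_of_lt ht2' h2yt (by omega)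
    obtain ⟨h3, h4⟩ := h.sub_of_lt h1 (hne y) (by omega)
    rw [show c - x ^ 2 = -((x - y) ^ 2 + 2 * y * (x - y) - (c - y ^ 2)) by ring, h.neg]
    exact ⟨o (x - y), by omega⟩
  · have hle := hmax x
    suffices o c + 4 ≤ o (c - x ^ 2) from ⟨o y + 2, by omega⟩
    by_cases h1 : (x - y) ^ 2 + 2 * y * (x - y) = 0
    · rw [show c - x ^ 2 = c - y ^ 2 by linear_combination -h1]
      omega
    have h3 := h.add _ _ ht2' h2yt h1
    have e : (c - y ^ 2) - ((x - y) ^ 2 + 2 * y * (x - y)) = c - x ^ 2 := by ring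
    have h4 := h.sub (hne y) h1 (by rw [e]; exact hne x)
    rw [e] at h4
    omega

/-- If `-b₁b₂` is a nonsquare approximated by a square to relative order exactly `4`, and
`ord b₁` is even, then `-b₁` is a norm from `F(√(-b₁b₂))`, whence `[b₁, b₂]` is represented
by `[1,1,1]`. -/
lemma represented_of_even (h : IsDyadicSetting o π) {b₁ b₂ y : F} (hb₁ : b₁ ≠ 0)
    (hD : ¬ IsSquare (-(b₁ * b₂)))
    (hy : o (-(b₁ * b₂) - y ^ 2) = o (-(b₁ * b₂)) + 4) (heven : Even (o b₁)) :
    ∃ u v : Fin 3 → F,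
      (∑ i, u i ^ 2) = b₁ ∧ (∑ i, v i ^ 2) = b₂ ∧ (∑ i, u i * v i) = 0 := by
  set D := -(b₁ * b₂) with hDdef
  have hD0 : D ≠ 0 := by intro h0; rw [h0] at hD; exact hD (IsSquare.zero)
  have hne : D - y ^ 2 ≠ 0 := fun hx => hD ⟨y, by linear_combination hx⟩
  have hoy : y ^ 2 ≠ 0 ∧ o (y ^ 2) = o D := by
    have := h.sub_of_lt hD0 hne (by omega)
    rwa [sub_sub_cancel] at this
  have hy0 : y ≠ 0 := fun hy0 => hoy.1 (by simp [hy0])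
  have h4y : 4 * y ^ 2 ≠ 0 := mul_ne_zero h.four_ne hoy.1
  obtain ⟨k, hk⟩ := heven
  obtain ⟨w, hw0, hw⟩ : ∃ w : F, w ≠ 0 ∧ o w = k := by
    refine ⟨π ^ k, zpow_ne_zero _ h.pi_ne, ?_⟩
    have hnat : ∀ n : ℕ, o (π ^ n) = n := by
      intro n
      induction n with
      | zero => simp [h.one]
      | succ n ih =>
        rw [pow_succ, h.mul _ _ (pow_ne_zero _ h.pi_ne) h.pi_ne, ih, h.o_pi]
        push_cast
        rfl
    obtain ⟨n, rfl | rfl⟩ := k.eq_nat_or_neg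
    · simpa using hnat n
    · rw [zpow_neg, zpow_natCast, ← one_div, h.div one_ne_zero (pow_ne_zero _ h.pi_ne), hnat,
        h.one, zero_sub]
  have hw2 := h.sq hw0
  have hw20 : w ^ 2 ≠ 0 := pow_ne_zero 2 hw0
  -- `ρ = (D - y²) / 4y²` and `ε = -b₁ / w²` are units, so `X² + X = ρ + ε` is solvable
  obtain ⟨X, hX⟩ := h.artin_schreier ((D - y ^ 2) / (4 * y ^ 2) + -b₁ / w ^ 2) fun h0 => by
    apply h.unit_add_unit (div_ne_zero hne h4y) (div_ne_zero (neg_ne_zero.2 hb₁) hw20) _ _ h0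
    · rw [h.div hne h4y, h.mul _ _ h.four_ne hoy.1, h.o_four]
      omega
    · rw [h.div (neg_ne_zero.2 hb₁) hw20, h.neg]
      omega
  refine h.represented (α := y * (2 * X + 1) / b₁) (β := 2 * y / w) ?_
  have h4 := h.four_ne
  field_simp at hX ⊢
  rw [hDdef] at hX
  linear_combination hX

/-- If `-b₁b₂` has relative defect `4` and `ord b₁` is odd, then `-b₁` is not a norm from
`F(√(-b₁b₂))`, so `[b₁, b₂]` is not represented by `[1,1,1]`. -/
lemma not_represented_of_odd (h : IsDyadicSetting o π) {b₁ b₂ y : F} (hb₁ : b₁ ≠ 0)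
    (hb₂ : b₂ ≠ 0) (hD : ¬ IsSquare (-(b₁ * b₂)))
    (hy : o (-(b₁ * b₂) - y ^ 2) = o (-(b₁ * b₂)) + 4)
    (hmax : ∀ x, o (-(b₁ * b₂) - x ^ 2) ≤ o (-(b₁ * b₂)) + 4) (hodd : Odd (o b₁)) :
    ¬ ∃ u v : Fin 3 → F,
      (∑ i, u i ^ 2) = b₁ ∧ (∑ i, v i ^ 2) = b₂ ∧ (∑ i, u i * v i) = 0 := by
  rintro ⟨u, v, hu, hv, huv⟩
  obtain ⟨A, B, C, hne, hABC⟩ := h.isotropic_of_represented hb₁ hb₂ hu hv huv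
  by_cases hA : A = 0
  · -- then `-b₁ B² = C²`, impossible by parity of `ord` unless `B = C = 0`
    subst hA
    by_cases hB : B = 0
    · subst hB
      exact hne ⟨rfl, rfl, by simpa using hABC⟩
    have := h.sub_sq_of_odd (c := -b₁) (neg_ne_zero.2 hb₁) (by rwa [h.neg]) (C / B)
    apply this.1
    field_simp
    linear_combination -hABC
  · -- `D - (b₁B/A)² = b₁ (C/A)²` has even order on the left and odd order on the right
    have e : -(b₁ * b₂) - (b₁ * B / A) ^ 2 = b₁ * (C / A) ^ 2 := by
      field_simp
      linear_combination -hABC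
    have hev := h.even_of_best_four hD hy hmax (b₁ * B / A)
    have hn : -(b₁ * b₂) - (b₁ * B / A) ^ 2 ≠ 0 := fun hx => hD ⟨b₁ * B / A, by
      linear_combination hx⟩
    rw [e] at hev hn
    have hCA : C / A ≠ 0 := by
      intro h0
      simp [h0] at hn
    rw [h.mul _ _ hb₁ (pow_ne_zero 2 hCA), h.sq hCA] at hev
    obtain ⟨i, hi⟩ := hev
    obtain ⟨j, hj⟩ := hodd
    omega

end IsDyadicSetting

/-! ### The quadratic defect -/

section Defect

variable {F : Type*} [Field F] {ord : F → WithTop ℤ} {o : F → ℤ} {π : F}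

lemma quadDefect_bounded {c : F} (hc : c ≠ 0) (v : WithTop ℤ)
    (hv : ∃ z : F, (∀ x : F, ∃ t : F, 0 ≤ ord t ∧ z = (c - x ^ 2) * t) ∧ v = ord (c⁻¹ * z)) :
    0 ≤ v := by
  obtain ⟨z, hz, rfl⟩ := hv
  obtain ⟨t, ht, rfl⟩ := hz 0
  rw [show c⁻¹ * ((c - 0 ^ 2) * t) = t by field_simp; ring]
  exact ht

lemma isGLB_quadDefect {c : F} (hc : c ≠ 0) :
    IsGLB {v : WithTop ℤ | ∃ z : F,
      (∀ x : F, ∃ t : F, 0 ≤ ord t ∧ z = (c - x ^ 2) * t) ∧ v = ord (c⁻¹ * z)}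
      (quadDefect ord c) :=
  WithTop.isGLB_sInf' ⟨0, fun v hv => quadDefect_bounded hc v hv⟩

lemma quadDefect_nonneg {c : F} (hc : c ≠ 0) : 0 ≤ quadDefect ord c :=
  (isGLB_quadDefect hc).2 fun v hv => quadDefect_bounded hc v hv

lemma quadDefect_of_isSquare (h0 : ord 0 = ⊤)
    {c : F} (hc : c ≠ 0) (hsq : IsSquare c) : quadDefect ord c = ⊤ := by
  obtain ⟨r, rfl⟩ := hsq
  rw [eq_top_iff]
  refine (isGLB_quadDefect hc).2 ?_
  rintro v ⟨z, hz, rfl⟩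
  obtain ⟨t, -, rfl⟩ := hz r
  rw [show (r * r)⁻¹ * ((r * r - r ^ 2) * t) = 0 by ring, h0]

/-- For a nonsquare the intersection of the ideals `(c - x²) O_F` is generated by `c - y²`
for a best approximation `y²`. -/
lemma quadDefect_of_best (hI : IsIntVal o)
    (hmul : ∀ x y, ord (x * y) = ord x + ord y) (hord : ∀ x, x ≠ 0 → ord x = (o x : ℤ))
    {c y : F} {n : ℤ} (hc : ¬ IsSquare c) (hy : o (c - y ^ 2) = o c + n)
    (hmax : ∀ x, o (c - x ^ 2) ≤ o c + n) : quadDefect ord c = (n : ℤ) := by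
  have hc0 : c ≠ 0 := by rintro rfl; exact hc (IsSquare.zero)
  have hne : ∀ x, c - x ^ 2 ≠ 0 := fun x hx => hc ⟨x, by linear_combination hx⟩
  have hval : ord (c⁻¹ * (c - y ^ 2)) = (n : ℤ) := by
    rw [inv_mul_eq_div, hord _ (div_ne_zero (hne y) hc0), hI.div (hne y) hc0, hy]
    congr 1
    omega
  refine (isGLB_quadDefect hc0).unique (IsLeast.isGLB ⟨?_, ?_⟩)
  · refine ⟨c - y ^ 2, fun x => ⟨(c - y ^ 2) / (c - x ^ 2), ?_, ?_⟩, hval.symm⟩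
    · rw [hord _ (div_ne_zero (hne y) (hne x)), hI.div (hne y) (hne x)]
      have := hmax x
      exact_mod_cast (by omega : (0 : ℤ) ≤ o (c - y ^ 2) - o (c - x ^ 2))
    · rw [mul_div_cancel₀ _ (hne x)]
  · rintro v ⟨z, hz, rfl⟩
    obtain ⟨t, ht, rfl⟩ := hz y
    rw [← mul_assoc, hmul, hval]
    exact le_add_of_nonneg_right ht

end Defect

/-! ### The field `ℚ₂(√2)` -/

section Local

variable {F : Type*} [Field F] [Algebra ℚ_[2] F]

lemma exists_coords (sq2 : F) (hsq2 : sq2 * sq2 = 2) (hgen : Algebra.adjoin ℚ_[2] {sq2} = ⊤)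
    (x : F) : ∃ a b : ℚ_[2], x = algebraMap ℚ_[2] F a + algebraMap ℚ_[2] F b * sq2 := by
  have hx : x ∈ Algebra.adjoin ℚ_[2] {sq2} := by rw [hgen]; trivial
  induction hx using Algebra.adjoin_induction with
  | mem x hx => exact ⟨0, 1, by simpa using hx⟩
  | algebraMap r => exact ⟨r, 0, by simp⟩
  | add x y _ _ hx hy =>
    obtain ⟨a, b, rfl⟩ := hx
    obtain ⟨c, d, rfl⟩ := hy
    exact ⟨a + c, b + d, by simp only [map_add]; ring⟩
  | mul x y _ _ hx hy =>
    obtain ⟨a, b, rfl⟩ := hx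
    obtain ⟨c, d, rfl⟩ := hy
    refine ⟨a * c + 2 * (b * d), a * d + b * c, ?_⟩
    simp only [map_add, map_mul, map_ofNat]
    linear_combination (algebraMap ℚ_[2] F b * algebraMap ℚ_[2] F d) * hsq2

/-- Hensel's lemma over `ℤ₂` for the first coordinate `x` of a solution `x + y√2` of
`X² + X = 2a + b√2`, after elimination of `y = b / (1 + 2x)`. -/
lemma exists_root (a b : ℤ_[2]) :
    ∃ x : ℤ_[2], (x ^ 2 + x - 2 * a) * (1 + 2 * x) ^ 2 + 2 * b ^ 2 = 0 := by
  open Polynomial in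
  let P : ℤ_[2][X] := (X ^ 2 + X - C (2 * a)) * (1 + C 2 * X) ^ 2 + C (2 * b ^ 2)
  have h2 : ∀ z : ℤ_[2], ‖2 * z‖ < 1 := fun z =>
    (PadicInt.norm_lt_one_iff_dvd _).2 ⟨z, by norm_num⟩
  have hder : ‖P.derivative.aeval (0 : ℤ_[2])‖ = 1 := by
    rw [← PadicInt.isUnit_iff]
    have e : P.derivative.aeval (0 : ℤ_[2]) = 1 - 2 * (4 * a) := by
      simp [P, Polynomial.derivative_pow]
      ring
    rw [e]
    exact IsLocalRing.isUnit_one_sub_self_of_mem_nonunits _ (PadicInt.mem_nonunits.2 (h2 _))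
  have hval : P.aeval (0 : ℤ_[2]) = 2 * (b ^ 2 - a) := by
    simp [P]
    ring
  obtain ⟨z, hz, -⟩ := hensels_lemma (F := P) (a := (0 : ℤ_[2])) (by
    rw [hder, hval, one_pow]
    exact h2 _)
  refine ⟨z, ?_⟩
  simpa [P] using hz

lemma one_add_two_mul_ne (x : ℤ_[2]) : 1 + 2 * x ≠ 0 := by
  intro h
  have h1 : ‖(2 : ℤ_[2]) * -x‖ < 1 := (PadicInt.norm_lt_one_iff_dvd _).2 ⟨-x, by norm_num⟩
  rw [show (2 : ℤ_[2]) * -x = 1 by linear_combination -h] at h1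
  simp at h1

variable [Algebra ℤ_[2] F] [IsScalarTower ℤ_[2] ℚ_[2] F]

lemma exists_artin_schreier (sq2 : F) (hsq2 : sq2 * sq2 = 2) (a b : ℤ_[2]) :
    ∃ X : F, X ^ 2 + X = algebraMap ℤ_[2] F (2 * a) + algebraMap ℤ_[2] F b * sq2 := by
  obtain ⟨x, hx⟩ := exists_root a b
  have hinj : Function.Injective (algebraMap ℤ_[2] F) := by
    rw [IsScalarTower.algebraMap_eq ℤ_[2] ℚ_[2] F]
    exact (algebraMap ℚ_[2] F).injective.comp (IsFractionRing.injective ℤ_[2] ℚ_[2])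
  have hne : 1 + 2 * algebraMap ℤ_[2] F x ≠ 0 := by
    have := (map_ne_zero_iff _ hinj).2 (one_add_two_mul_ne x)
    rwa [map_add, map_mul, map_one, map_ofNat] at this
  have hx' := congrArg (algebraMap ℤ_[2] F) hx
  simp only [map_add, map_mul, map_sub, map_pow, map_one, map_ofNat, map_zero] at hx' ⊢
  refine ⟨algebraMap ℤ_[2] F x
    + algebraMap ℤ_[2] F b / (1 + 2 * algebraMap ℤ_[2] F x) * sq2, ?_⟩
  generalize algebraMap ℤ_[2] F x = x' at *
  generalize algebraMap ℤ_[2] F a = a' at *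
  generalize algebraMap ℤ_[2] F b = b' at *
  obtain ⟨y, rfl⟩ : ∃ y, b' = y * (1 + 2 * x') := ⟨b' / (1 + 2 * x'), by field_simp⟩
  have hx'' : x' ^ 2 + x' - 2 * a' + 2 * y ^ 2 = 0 := by
    refine (mul_eq_zero.1 ?_).resolve_right (pow_ne_zero 2 hne)
    linear_combination hx'
  rw [mul_div_cancel_right₀ _ hne]
  linear_combination hx'' + y ^ 2 * hsq2

/-- The hypotheses on `ord` identify it with a valuation for which `ℚ₂(√2)` has the
properties collected in `IsDyadicSetting`. -/
lemma exists_setting (sq2 : F) (hsq2 : sq2 * sq2 = 2)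
    (hgen : Algebra.adjoin ℚ_[2] {sq2} = ⊤)
    (ord : F → WithTop ℤ)
    (hord_top : ∀ x : F, ord x = ⊤ ↔ x = 0)
    (hord_mul : ∀ x y : F, ord (x * y) = ord x + ord y)
    (hord_add : ∀ x y : F, min (ord x) (ord y) ≤ ord (x + y))
    (hord_sq2 : ord sq2 = 1)
    (hord_int : ∀ x : F, 0 ≤ ord x ↔ IsIntegral ℤ_[2] x) :
    ∃ o : F → ℤ, (∀ x, x ≠ 0 → ord x = (o x : ℤ)) ∧ IsDyadicSetting o sq2 := by
  have hord : ∀ x, x ≠ 0 → ord x = ((ord x).untopD 0 : ℤ) := by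
    intro x hx
    obtain ⟨n, hn⟩ := WithTop.ne_top_iff_exists.1 (mt (hord_top x).1 hx)
    rw [← hn]
    rfl
  generalize ho : (fun x => (ord x).untopD 0) = o
  replace hord : ∀ x, x ≠ 0 → ord x = (o x : ℤ) := by
    intro x hx
    rw [hord x hx, ← ho]
  have hI : IsIntVal o := by
    refine ⟨fun x y hx hy => ?_, fun x y hx hy hxy => ?_⟩
    · have := hord_mul x y
      rw [hord _ hx, hord _ hy, hord _ (mul_ne_zero hx hy)] at this
      exact_mod_cast this
    · have := hord_add x y
      rw [hord _ hx, hord _ hy, hord _ hxy] at this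
      exact_mod_cast this
  have hint : ∀ x, x ≠ 0 → (0 ≤ o x ↔ IsIntegral ℤ_[2] x) := by
    intro x hx
    rw [← hord_int, hord x hx]
    norm_cast
  have hcoe : ((2 : ℤ_[2]) : ℚ_[2]) = 2 := map_ofNat PadicInt.Coe.ringHom 2
  set φ := algebraMap ℚ_[2] F with hφ
  have hinj : Function.Injective φ := φ.injective
  have htwo : (2 : F) ≠ 0 := by
    have := (map_ne_zero φ).2 (two_ne_zero (α := ℚ_[2]))
    rwa [map_ofNat] at this
  have hs0 : sq2 ≠ 0 := by
    rintro rfl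
    exact htwo (by rw [← hsq2, mul_zero])
  have hos : o sq2 = 1 := by
    have := hord sq2 hs0
    rw [hord_sq2] at this
    exact_mod_cast this.symm
  have ho2 : o 2 = 2 := by
    rw [← hsq2, hI.mul _ _ hs0 hs0, hos]
    rfl
  have htower : ∀ p : ℤ_[2], algebraMap ℤ_[2] F p = φ (p : ℚ_[2]) := fun p =>
    IsScalarTower.algebraMap_apply ℤ_[2] ℚ_[2] F p
  -- `2`-adic integers have nonnegative order, and conversely
  have hZ : ∀ p : ℤ_[2], p ≠ 0 → 0 ≤ o (φ p) := by
    intro p hp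
    rw [hint _ ((map_ne_zero φ).2 (mt PadicInt.coe_eq_zero.1 hp)), ← htower]
    exact isIntegral_algebraMap
  have hZ' : ∀ a : ℚ_[2], (a ≠ 0 → 0 ≤ o (φ a)) → ∃ p : ℤ_[2], (p : ℚ_[2]) = a := by
    intro a ha
    by_cases ha0 : a = 0
    · exact ⟨0, by simp [ha0]⟩
    have h1 := (hint _ ((map_ne_zero φ).2 ha0)).1 (ha ha0)
    rw [isIntegral_algebraMap_iff hinj] at h1
    exact IsIntegrallyClosed.algebraMap_eq_of_integral h1
  have hunit : ∀ u : ℚ_[2], ‖u‖ = 1 → o (φ u) = 0 := by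
    intro u hu
    have hu0 : u ≠ 0 := by rintro rfl; simp at hu
    have hu' : ‖u⁻¹‖ = 1 := by simp [hu]
    have h1 := hZ ⟨u, hu.le⟩ (by intro h; exact hu0 (congrArg Subtype.val h))
    have h2 := hZ ⟨u⁻¹, hu'.le⟩ (by intro h; exact inv_ne_zero hu0 (congrArg Subtype.val h))
    have h3 := hI.mul (φ u) (φ u⁻¹) ((map_ne_zero φ).2 hu0) ((map_ne_zero φ).2 (inv_ne_zero hu0))
    rw [← map_mul, mul_inv_cancel₀ hu0, map_one, hI.one] at h3
    change 0 ≤ o (φ u) at h1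
    change 0 ≤ o (φ u⁻¹) at h2
    omega
  -- the order is even on `ℚ₂`, so the two coordinates of `a + b√2` cannot cancel
  have heven : ∀ a : ℚ_[2], a ≠ 0 → Even (o (φ a)) := by
    have hpow : ∀ n : ℕ, o ((2 : F) ^ n) = 2 * n := by
      intro n
      induction n with
      | zero => simp [hI.one]
      | succ n ih =>
        rw [pow_succ, hI.mul _ _ (pow_ne_zero _ htwo) htwo, ih, ho2]
        push_cast
        ring
    intro a ha
    have hn := Padic.norm_eq_zpow_neg_valuation ha
    generalize a.valuation = n at hn
    have h2 : ‖(2 : ℚ_[2])‖ = 2⁻¹ := by simpa using Padic.norm_p (p := 2)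
    obtain ⟨m, rfl | rfl⟩ := n.eq_nat_or_neg
    · have hu : ‖a / 2 ^ m‖ = 1 := by
        rw [norm_div, norm_pow, hn, h2]
        push_cast
        simp
      have h3 := hunit _ hu
      rw [map_div₀, map_pow, map_ofNat,
        hI.div ((map_ne_zero φ).2 ha) (pow_ne_zero _ htwo), hpow] at h3
      exact ⟨m, by omega⟩
    · have hu : ‖a * 2 ^ m‖ = 1 := by
        rw [norm_mul, norm_pow, hn, h2]
        push_cast
        simp
      have h3 := hunit _ hu
      rw [map_mul, map_pow, map_ofNat,
        hI.mul _ _ ((map_ne_zero φ).2 ha) (pow_ne_zero _ htwo), hpow] at h3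
      exact ⟨-m, by omega⟩
  have hbs : ∀ b : ℚ_[2], b ≠ 0 → φ b * sq2 ≠ 0 ∧ o (φ b * sq2) = o (φ b) + 1 := fun b hb =>
    ⟨mul_ne_zero ((map_ne_zero φ).2 hb) hs0, by
      rw [hI.mul _ _ ((map_ne_zero φ).2 hb) hs0, hos]⟩
  have hcoord : ∀ a b : ℚ_[2], ∀ k : ℤ,
      (φ a + φ b * sq2 ≠ 0 → k ≤ o (φ a + φ b * sq2)) →
      (a ≠ 0 → k ≤ o (φ a)) ∧ (b ≠ 0 → k ≤ o (φ b) + 1) := by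
    intro a b k hk
    by_cases ha : a = 0
    · subst ha
      refine ⟨fun h => absurd rfl h, fun hb => ?_⟩
      rw [← (hbs b hb).2]
      simpa using hk (by simpa using (hbs b hb).1)
    by_cases hb : b = 0
    · subst hb
      refine ⟨fun _ => ?_, fun h => absurd rfl h⟩
      simpa using hk (by simpa using ha)
    have ha' : φ a ≠ 0 := (map_ne_zero φ).2 ha
    obtain ⟨hb', hob⟩ := hbs b hb
    obtain ⟨i, hi⟩ := heven a ha
    obtain ⟨j, hj⟩ := heven b hb
    rcases lt_or_gt_of_ne (show o (φ a) ≠ o (φ b * sq2) by omega) with hlt | hlt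
    · obtain ⟨h1, h2⟩ := hI.add_of_lt ha' hb' hlt
      have := hk h1
      omega
    · obtain ⟨h1, h2⟩ := hI.add_of_lt hb' ha' hlt
      rw [add_comm] at h1 h2
      have := hk h1
      omega
  have hdvd : ∀ a : ℚ_[2], (a ≠ 0 → 1 ≤ o (φ a)) → ∃ p : ℤ_[2], 2 * (p : ℚ_[2]) = a := by
    intro a ha
    obtain ⟨p, hp⟩ := hZ' (a / 2) (by
      intro h
      have ha0 : a ≠ 0 := by rintro rfl; simp at h
      rw [map_div₀, map_ofNat, hI.div ((map_ne_zero φ).2 ha0) htwo, ho2]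
      obtain ⟨i, hi⟩ := heven a ha0
      have := ha ha0
      omega)
    exact ⟨p, by rw [hp]; ring⟩
  have hmax : ∀ p q : ℤ_[2], φ (2 * p) + φ q * sq2 ≠ 0 → 0 < o (φ (2 * p) + φ q * sq2) := by
    intro p q hne
    have hp : p ≠ 0 → φ (2 * p) ≠ 0 ∧ 0 < o (φ (2 * p)) := by
      intro hp
      have hp' : φ p ≠ 0 := (map_ne_zero φ).2 (mt PadicInt.coe_eq_zero.1 hp)
      rw [map_mul, map_ofNat, hI.mul _ _ htwo hp', ho2]
      have := hZ p hp
      exact ⟨mul_ne_zero htwo hp', by omega⟩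
    have hq : q ≠ 0 → φ q * sq2 ≠ 0 ∧ 0 < o (φ q * sq2) := by
      intro hq
      obtain ⟨h1, h2⟩ := hbs q (mt PadicInt.coe_eq_zero.1 hq)
      have := hZ q hq
      exact ⟨h1, by omega⟩
    by_cases hp0 : p = 0
    · subst hp0
      simp at hne ⊢
      exact (hq hne.1).2
    by_cases hq0 : q = 0
    · subst hq0
      simpa using (hp hp0).2
    have := hI.add _ _ (hp hp0).1 (hq hq0).1 hne
    have := (hp hp0).2
    have := (hq hq0).2
    omega
  refine ⟨o, hord, ⟨hI, htwo, hsq2, hos, ?_, ?_⟩⟩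
  · intro x hx hox hx1
    obtain ⟨a, b, rfl⟩ := exists_coords sq2 hsq2 hgen x
    obtain ⟨h1, h2⟩ := hcoord a b 0 (fun _ => hox.ge)
    obtain ⟨p, rfl⟩ := hZ' a h1
    obtain ⟨q, rfl⟩ := hZ' b (fun hb => by
      obtain ⟨j, hj⟩ := heven b hb
      have := h2 hb
      omega)
    obtain ⟨n, hn, hmem⟩ := PadicInt.exists_mem_range p
    rw [IsLocalRing.mem_maximalIdeal, PadicInt.mem_nonunits,
      PadicInt.norm_lt_one_iff_dvd] at hmem
    obtain ⟨r, hr⟩ := hmem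
    have hp : (p : ℚ_[2]) = n + 2 * r := by
      have := congrArg (fun z : ℤ_[2] => (z : ℚ_[2])) hr
      push_cast at this
      rw [hcoe] at this
      linear_combination this
    interval_cases n
    · rw [hp, Nat.cast_zero, zero_add] at hx hox
      exact absurd hox (hmax r q hx).ne'
    · have e : φ p + φ q * sq2 - 1 = φ (2 * r) + φ q * sq2 := by
        rw [hp, map_add, Nat.cast_one, map_one]
        ring
      rw [e] at hx1 ⊢
      exact hmax r q hx1
  · intro c hc
    obtain ⟨a, b, rfl⟩ := exists_coords sq2 hsq2 hgen c
    obtain ⟨h1, h2⟩ := hcoord a b 1 hc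
    obtain ⟨p, rfl⟩ := hdvd a h1
    obtain ⟨q, rfl⟩ := hZ' b (fun hb => by have := h2 hb; omega)
    obtain ⟨X, hX⟩ := exists_artin_schreier sq2 hsq2 p q
    refine ⟨X, ?_⟩
    rw [hX, htower, htower, PadicInt.coe_mul, hcoe]

end Local

/-- Let `F = ℚ₂(√2)` with normalized valuation `ord` (so `ord √2 = 1` and
`e = ord 2 = 2`), and let `b₁, b₂ ∈ F^×` with `S₁ = ord b₁`, `S₂ = ord b₂`.  Then the
following five conditions hold simultaneously:
(1) `S₁ ≥ -S₂ > 0`;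
(2) `d(-b₁) ≥ 2 - S₁` and `d(-b₁b₂) ≥ 2 - S₂`;
(3) `d(-b₁) + d(-b₁b₂) > 4 + S₂`;
(4) `2·d(-b₁b₂) > 4 + S₁`;
(5) the binary space `[b₁, b₂]` is not represented by the ternary space `[1,1,1]` over `F`;
if and only if `S₁ = 3`, `S₂ = -1` and `d(-b₁b₂) = 4`. -/
theorem five_conditions_iff
    (F : Type*) [Field F] [Algebra ℚ_[2] F]
    [Algebra ℤ_[2] F] [IsScalarTower ℤ_[2] ℚ_[2] F]
    (sq2 : F) (hsq2 : sq2 * sq2 = 2)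
    (hgen : Algebra.adjoin ℚ_[2] {sq2} = ⊤)
    (ord : F → WithTop ℤ)
    (hord_top : ∀ x : F, ord x = ⊤ ↔ x = 0)
    (hord_mul : ∀ x y : F, ord (x * y) = ord x + ord y)
    (hord_add : ∀ x y : F, min (ord x) (ord y) ≤ ord (x + y))
    (hord_sq2 : ord sq2 = 1)
    (hord_int : ∀ x : F, 0 ≤ ord x ↔ IsIntegral ℤ_[2] x)
    (b₁ b₂ : F) (hb₁ : b₁ ≠ 0) (hb₂ : b₂ ≠ 0)
    (S₁ S₂ : ℤ) (hS₁ : ord b₁ = (S₁ : WithTop ℤ)) (hS₂ : ord b₂ = (S₂ : WithTop ℤ)) :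
    ((0 < -S₂ ∧ -S₂ ≤ S₁) ∧
     (((2 - S₁ : ℤ) : WithTop ℤ) ≤ quadDefect ord (-b₁) ∧
       ((2 - S₂ : ℤ) : WithTop ℤ) ≤ quadDefect ord (-(b₁ * b₂))) ∧
     (((4 + S₂ : ℤ) : WithTop ℤ) < quadDefect ord (-b₁) + quadDefect ord (-(b₁ * b₂))) ∧
     (((4 + S₁ : ℤ) : WithTop ℤ) < 2 * quadDefect ord (-(b₁ * b₂))) ∧
     ¬ ∃ u v : Fin 3 → F,
        (∑ i, u i ^ 2) = b₁ ∧ (∑ i, v i ^ 2) = b₂ ∧ (∑ i, u i * v i) = 0)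
    ↔ (S₁ = 3 ∧ S₂ = -1 ∧ quadDefect ord (-(b₁ * b₂)) = 4) := by
  obtain ⟨o, hord, h⟩ := exists_setting sq2 hsq2 hgen ord hord_top hord_mul hord_add hord_sq2
    hord_int
  have h0 : ord 0 = ⊤ := (hord_top 0).2 rfl
  have hS₁' : o b₁ = S₁ := by rw [hord b₁ hb₁] at hS₁; exact_mod_cast hS₁
  have hS₂' : o b₂ = S₂ := by rw [hord b₂ hb₂] at hS₂; exact_mod_cast hS₂
  have hD0 : -(b₁ * b₂) ≠ 0 := neg_ne_zero.2 (mul_ne_zero hb₁ hb₂)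
  have hoD : o (-(b₁ * b₂)) = S₁ + S₂ := by rw [h.neg, h.mul _ _ hb₁ hb₂, hS₁', hS₂']
  -- elements of odd order have relative defect `0`
  have hodd0 : ∀ c : F, c ≠ 0 → Odd (o c) → quadDefect ord c = ((0 : ℤ) : WithTop ℤ) := by
    intro c hc hodd
    have hsub := h.sub_sq_of_odd hc hodd
    refine quadDefect_of_best h.toIsIntVal hord_mul hord (y := 0) ?_ (by simp)
      (fun x => by simpa using (hsub x).2)
    rintro ⟨r, hr⟩
    exact (hsub r).1 (by rw [hr]; ring)
  have e2 : (2 : WithTop ℤ) = ((2 : ℤ) : WithTop ℤ) := rfl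
  have e4 : (4 : WithTop ℤ) = ((4 : ℤ) : WithTop ℤ) := rfl
  rw [e2, e4]
  constructor
  · rintro ⟨⟨hneg, hle⟩, ⟨h2a, h2b⟩, h3, h4, h5⟩
    by_cases hsq : IsSquare (-(b₁ * b₂))
    · -- `[b₁, b₂]` is then a hyperbolic plane
      obtain ⟨r, hr⟩ := hsq
      refine absurd (h.represented (α := r / b₁) (β := 0) ?_) h5
      field_simp
      linear_combination -hr
    obtain ⟨n, y, hn0, hn4, hy, hmax⟩ := h.exists_best hsq
    have hd := quadDefect_of_best h.toIsIntVal hord_mul hord hsq hy hmax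
    rw [hd] at h2b h4 ⊢
    have h2b' : 2 - S₂ ≤ n := by exact_mod_cast h2b
    have h4' : 4 + S₁ < 2 * n := by
      rw [← WithTop.coe_mul] at h4
      exact WithTop.coe_lt_coe.1 h4
    have hpar : Even (S₁ + S₂) := by
      rw [← Int.not_odd_iff_even, ← hoD]
      intro hodd
      rw [hodd0 _ hD0 hodd] at hd
      have : (0 : ℤ) = n := by exact_mod_cast hd
      omega
    have hS₁odd : Odd S₁ → 2 ≤ S₁ := by
      intro hodd
      rw [hodd0 (-b₁) (neg_ne_zero.2 hb₁) (by rwa [h.neg, hS₁'])] at h2a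
      have : 2 - S₁ ≤ 0 := by exact_mod_cast h2a
      omega
    obtain ⟨m, hm⟩ := hpar
    rcases Int.even_or_odd S₁ with hev | hodd
    · obtain ⟨k, hk⟩ := hev
      have hn : n = 4 := by omega
      subst hn
      exact absurd (h.represented_of_even hb₁ hsq hy ⟨k, by omega⟩) h5
    · have := hS₁odd hodd
      obtain ⟨k, hk⟩ := hodd
      have hn : n = 4 := by omega
      subst hn
      exact ⟨by omega, by omega, rfl⟩
  · rintro ⟨rfl, rfl, hd⟩
    have hnn := quadDefect_nonneg (ord := ord) (neg_ne_zero.2 hb₁)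
    have hsq : ¬ IsSquare (-(b₁ * b₂)) := by
      intro hsq
      rw [quadDefect_of_isSquare h0 hD0 hsq] at hd
      exact absurd hd (WithTop.coe_ne_top (a := (4 : ℤ))).symm
    obtain ⟨n, y, hn0, hn4, hy, hmax⟩ := h.exists_best hsq
    have hn : n = 4 := by
      rw [quadDefect_of_best h.toIsIntVal hord_mul hord hsq hy hmax] at hd
      exact WithTop.coe_injective hd
    subst hn
    rw [hd]
    refine ⟨⟨by norm_num, by norm_num⟩, ⟨le_trans ?_ hnn, ?_⟩, ?_, ?_,
      h.not_represented_of_odd hb₁ hb₂ hsq hy hmax ⟨1, by omega⟩⟩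
    · exact_mod_cast (by norm_num : (2 - 3 : ℤ) ≤ 0)
    · exact WithTop.coe_le_coe.2 (by norm_num)
    · refine lt_of_lt_of_le ?_ (le_add_of_nonneg_left hnn)
      exact WithTop.coe_lt_coe.2 (by norm_num)
    · rw [← WithTop.coe_mul]
      exact WithTop.coe_lt_coe.2 (by norm_num)
end

section
/- Let F be a dyadic local field, i.e., a finite field extension of ℚ₂, with valuation ring O_F, normalized valuation ord and e = ord(2). Let b₁, b₂ ∈ F^× with ord(b₁) ≤ ord(b₂). Then the following are equivalent: (1) the diagonal binary lattice ⟨b₁, b₂⟩ is represented by I₅ over O_F, i.e., there exist u, v ∈ O_F⁵ with Σᵢ uᵢ² = b₁, Σᵢ vᵢ² = b₂ and Σᵢ uᵢvᵢ = 0; (2) ⟨b₁, b₂⟩ is represented by I_m over O_F for some integer m ≥ 2; (3) ord(b₁) ≥ 0, d(−b₁) ≥ e − ord(b₁), and d(−b₁b₂) ≥ e − ord(b₂). -/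
/-- The diagonal binary lattice `⟨b₁, b₂⟩` is represented by `I_m` over the subring
`O ⊆ F`: there are `u, v ∈ O^m` with `Σ uᵢ² = b₁`, `Σ vᵢ² = b₂` and `Σ uᵢvᵢ = 0`. -/
def RepByIm {F : Type*} [Field F] (O : Set F) (m : ℕ) (b₁ b₂ : F) : Prop :=
  ∃ u v : Fin m → F, (∀ i, u i ∈ O) ∧ (∀ i, v i ∈ O) ∧
    (∑ i, u i ^ 2) = b₁ ∧ (∑ i, v i ^ 2) = b₂ ∧ (∑ i, u i * v i) = 0

/-! ### Dyadic rings and representations by `I₅` -/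

/-- The properties of the ring of integers `R` of a dyadic local field, with uniformizer `π`
and `2` of order `e`, on which the construction of representations rests. -/
structure IsDyadicRing (R : Type*) [CommRing R] [IsDomain R] (π : R) (e : ℕ) : Prop where
  /-- Nonzero elements are units times powers of `π`. -/
  factor : ∀ x : R, x ≠ 0 → ∃ (n : ℕ) (c : Rˣ), x = c * π ^ n
  two_eq : ∃ c : Rˣ, (2 : R) = c * π ^ e
  pos : 0 < e
  not_unit : ¬ IsUnit π
  /-- The residue field is perfect of characteristic two. -/
  perfect : ∀ x : R, ∃ y : R, π ∣ x - y ^ 2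
  /-- Hensel's lemma for separable quadratic polynomials. -/
  hensel : ∀ a ρ : R, IsUnit a → π ∣ ρ → ∃ x : R, x ^ 2 + a * x = ρ
  /-- The Artin–Schreier map of the residue field has image of index two: either `1` lies in
  the image, or the image and its translate by `1` cover the residue field. -/
  artinSchreier : (∃ η : R, π ∣ η ^ 2 + η + 1) ∨
    ∀ ρ : R, ∃ η : R, π ∣ ρ - (η ^ 2 + η) ∨ π ∣ ρ - (η ^ 2 + η + 1)

namespace IsDyadicRing

variable {R : Type*} [CommRing R] [IsDomain R] {π : R} {e : ℕ}

theorem ne_zero (h : IsDyadicRing R π e) (h2 : (2 : R) ≠ 0) : π ≠ 0 := by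
  rintro rfl
  obtain ⟨c, hc⟩ := h.two_eq
  rw [zero_pow h.pos.ne', mul_zero] at hc
  exact h2 hc

theorem dvd_two (h : IsDyadicRing R π e) : π ∣ 2 := by
  obtain ⟨c, hc⟩ := h.two_eq
  rw [hc]
  exact (dvd_pow_self π h.pos.ne').mul_left _

theorem unit_of_not_dvd (h : IsDyadicRing R π e) {x : R} (hx : ¬ π ∣ x) : IsUnit x := by
  have hx0 : x ≠ 0 := by
    rintro rfl
    exact hx (dvd_zero _)
  obtain ⟨n, c, rfl⟩ := h.factor x hx0
  rcases Nat.eq_zero_or_pos n with rfl | hn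
  · simp
  · exact absurd ((dvd_pow_self π hn.ne').mul_left _) hx

theorem not_dvd_unit (h : IsDyadicRing R π e) {x : R} (hx : IsUnit x) : ¬ π ∣ x :=
  fun hd => h.not_unit (isUnit_of_dvd_unit hd hx)

theorem unit_add (h : IsDyadicRing R π e) {x y : R} (hx : IsUnit x) (hy : π ∣ y) :
    IsUnit (x + y) :=
  h.unit_of_not_dvd fun hd => h.not_dvd_unit hx ((dvd_add_left hy).mp hd)

theorem unit_two_mul_add_one (h : IsDyadicRing R π e) (η : R) : IsUnit (2 * η + 1) := by
  rw [add_comm]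
  exact h.unit_add isUnit_one (h.dvd_two.mul_right _)

theorem unit_three (h : IsDyadicRing R π e) : IsUnit (3 : R) := by
  have := h.unit_two_mul_add_one 1
  norm_num at this
  exact this

theorem sqrt_neg_seven (h : IsDyadicRing R π e) : ∃ α : R, α ^ 2 = -7 := by
  obtain ⟨x, hx⟩ := h.hensel 1 (-2) isUnit_one h.dvd_two.neg_right
  exact ⟨1 + 2 * x, by linear_combination 4 * hx⟩

/-- The norm form of the unramified quadratic extension represents all elements of even
order. -/
theorem norm_even (h : IsDyadicRing R π e) {c : R} (hc : IsUnit c) (k : ℕ) :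
    ∃ p q : R, c * π ^ (2 * k) = p ^ 2 + p * q + q ^ 2 := by
  obtain ⟨y, hy⟩ := h.perfect c
  have hyu : IsUnit y := h.unit_of_not_dvd fun hd =>
    h.not_dvd_unit hc ((dvd_sub_left (dvd_pow hd two_ne_zero)).mp hy)
  obtain ⟨x, hx⟩ := h.hensel y _ hyu hy
  exact ⟨y * π ^ k, x * π ^ k, by rw [mul_comm 2 k, pow_mul]; linear_combination -(π ^ k) ^ 2 * hx⟩

/-- If the residue field contains a primitive cube root of unity, then the norm form splits
and is universal. -/
theorem norm_all (h : IsDyadicRing R π e) (hη : ∃ η : R, π ∣ η ^ 2 + η + 1) (c : R) :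
    ∃ p q : R, c = p ^ 2 + p * q + q ^ 2 := by
  obtain ⟨η, hη⟩ := hη
  obtain ⟨x, hx⟩ := h.hensel (2 * η + 1) _ (h.unit_two_mul_add_one η) hη.neg_right
  set ω := η + x with hω
  have hω2 : ω ^ 2 + ω + 1 = 0 := by rw [hω]; linear_combination hx
  obtain ⟨d, hd⟩ := (h.unit_two_mul_add_one ω).exists_right_inv
  refine ⟨1 + ω * ((c - 1) * d), (c - 1) * d, ?_⟩
  linear_combination (-(c - 1)) * hd - ((c-1) * d) ^ 2 * hω2

/-- If `2j ≤ ord (b - ε z²)` and `ord (2z) ≤ j`, then `b = ε z² (1 + 4τ)` with `τ` integral, and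
by Hensel's lemma `b` is `ε` or `-3ε` times a square. -/
theorem square_class (h : IsDyadicRing R π e)
    (has : ∀ ρ : R, ∃ η : R, π ∣ ρ - (η ^ 2 + η) ∨ π ∣ ρ - (η ^ 2 + η + 1))
    {ε b z : R} (hε : IsUnit ε) (j : ℕ) (hd : π ^ (2 * j) ∣ b - ε * z ^ 2)
    (hz : ¬ π ^ (j + 1) ∣ 2 * z) :
    (∃ y, b = ε * y ^ 2) ∨ ∃ y, b = -3 * ε * y ^ 2 := by
  have hz0 : 2 * z ≠ 0 := by
    intro h0
    exact hz (h0 ▸ dvd_zero _)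
  obtain ⟨i, v, hv⟩ := h.factor _ hz0
  have hij : i ≤ j := by
    by_contra hlt
    exact hz (hv ▸ (pow_dvd_pow π (by omega)).mul_left _)
  obtain ⟨ε', hε'⟩ := hε.exists_right_inv
  obtain ⟨c, hc⟩ := (pow_dvd_pow π (show 2 * i ≤ 2 * j by omega)).trans hd
  obtain ⟨v', hv'⟩ := v.isUnit.exists_right_inv
  obtain ⟨τ, hτ⟩ : ∃ τ, b = ε * z ^ 2 * (1 + 4 * τ) := by
    refine ⟨c * ε' * v' ^ 2, ?_⟩
    have h1 : 4 * z ^ 2 = v ^ 2 * π ^ (2 * i) := by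
      rw [mul_comm 2 i, pow_mul]
      linear_combination (2 * z + v * π ^ i) * hv
    linear_combination hc - ε * c * ε' * v' ^ 2 * h1 - π ^ (2 * i) * c * (v * v') ^ 2 * hε'
      - π ^ (2 * i) * c * (v * v' + 1) * hv'
  obtain ⟨η, hη | hη⟩ := has τ
  · obtain ⟨x, hx⟩ := h.hensel _ _ (h.unit_two_mul_add_one η) hη
    exact Or.inl ⟨z * (1 + 2 * (η + x)), by
      rw [hτ]; linear_combination (-4 * ε * z ^ 2) * hx⟩
  · obtain ⟨w, hw⟩ := h.unit_three.exists_right_inv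
    have hρ : π ∣ -w * (3 * (η ^ 2 + η) + 1 + τ) := by
      refine Dvd.dvd.mul_left ?_ _
      have : 3 * (η ^ 2 + η) + 1 + τ = (τ - (η ^ 2 + η + 1)) + 2 * (2 * (η ^ 2 + η) + 1) := by ring
      rw [this]
      exact dvd_add hη (h.dvd_two.mul_right _)
    obtain ⟨x, hx⟩ := h.hensel _ _ (h.unit_two_mul_add_one η) hρ
    refine Or.inr ⟨z * (1 + 2 * (η + x)), ?_⟩
    rw [hτ]
    linear_combination (12 * ε * z ^ 2) * hx - 4 * ε * z ^ 2 * (3 * (η ^ 2 + η) + 1 + τ) * hw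

/-- An element congruent to `ε z²` modulo `2` is either represented by
`ε z² + 2 (p² + p q + q²)` or equal to `-3 ε` times a square. The representation is found by
improving the approximation `b ≈ ε z²` until the error has the parity of `e`. -/
theorem rep_or_square (h : IsDyadicRing R π e) (h2 : (2 : R) ≠ 0)
    {ε b : R} (hε : IsUnit ε) (hb0 : b ≠ 0) (hb : ∃ z : R, 2 ∣ b - ε * z ^ 2) :
    (∃ z p q : R, b = ε * z ^ 2 + 2 * (p ^ 2 + p * q + q ^ 2)) ∨ ∃ y, b = -3 * ε * y ^ 2 := by
  rcases h.artinSchreier with has | has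
  · obtain ⟨z, c, hc⟩ := hb
    obtain ⟨p, q, hpq⟩ := h.norm_all has c
    exact Or.inl ⟨z, p, q, by rw [← hpq]; linear_combination hc⟩
  by_contra hcon
  rw [not_or] at hcon
  obtain ⟨hcon1, hcon2⟩ := hcon
  have hπ := h.ne_zero h2
  obtain ⟨w, hw⟩ := h.two_eq
  obtain ⟨w', hw'⟩ := w.isUnit.exists_right_inv
  obtain ⟨ε', hε'⟩ := hε.exists_right_inv
  -- an error term of order `e + 2k` is twice a value of the norm form
  have hno : ∀ (z c : R) (k : ℕ), IsUnit c → b - ε * z ^ 2 ≠ π ^ (e + 2 * k) * c := by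
    intro z c k hc hz
    have hwu : IsUnit (w' * c) := (IsUnit.of_mul_eq_one_right _ hw').mul hc
    obtain ⟨p, q, hpq⟩ := h.norm_even hwu k
    refine hcon1 ⟨z, p, q, ?_⟩
    rw [← hpq]
    rw [pow_add] at hz
    linear_combination hz - π ^ (2 * k) * w' * c * hw - π ^ e * π ^ (2 * k) * c * hw'
  have hdvd : ∀ (z : R) (j : ℕ), π ^ (2 * j) ∣ b - ε * z ^ 2 → π ^ (j + 1) ∣ 2 * z := by
    intro z j hd
    by_contra hz
    rcases h.square_class has hε j hd hz with ⟨y, hy⟩ | hy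
    · exact hcon1 ⟨y, 0, 0, by rw [hy]; ring⟩
    · exact hcon2 hy
  have key : ∀ n : ℕ, ∃ z : R, π ^ (e + n) ∣ b - ε * z ^ 2 := by
    intro n
    induction n with
    | zero =>
      obtain ⟨z, hz⟩ := hb
      exact ⟨z, (Dvd.intro_left _ hw.symm).trans hz⟩
    | succ n ih =>
      obtain ⟨z, c, hc⟩ := ih
      by_cases hcu : π ∣ c
      · obtain ⟨d, rfl⟩ := hcu
        exact ⟨z, d, by rw [hc]; ring⟩
      have hcu := h.unit_of_not_dvd hcu
      rcases Nat.even_or_odd' n with ⟨k, rfl | rfl⟩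
      · exact absurd hc (hno z c k hcu)
      rcases Nat.even_or_odd' (e + (2 * k + 1)) with ⟨j, hj | hj⟩
      · obtain ⟨x, hx⟩ := hdvd z j ⟨c, by rw [hc, hj]⟩
        obtain ⟨y, d, hd⟩ := h.perfect (c * ε')
        refine ⟨z + π ^ j * y, ε * d - ε * x * y, ?_⟩
        rw [← add_assoc, pow_succ π, hj, mul_comm 2 j, pow_mul]
        rw [hj, mul_comm 2 j, pow_mul] at hc
        rw [pow_succ] at hx
        linear_combination hc - ε * π ^ j * y * hx + (π ^ j) ^ 2 * ε * hd
          - (π ^ j) ^ 2 * c * hε'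
      · obtain ⟨x, hx⟩ := hdvd z j (by rw [hc, hj, pow_succ, mul_assoc]; exact dvd_mul_right _ _)
        have hu : IsUnit (-ε + π * (c - ε * x)) := h.unit_add hε.neg (dvd_mul_right _ _)
        refine absurd ?_ (hno (z + π ^ j) _ k hu)
        rw [show e + 2 * k = j * 2 by omega, pow_mul]
        rw [hj, pow_succ π, mul_comm 2 j, pow_mul] at hc
        rw [pow_succ] at hx
        linear_combination hc - ε * π ^ j * hx
  obtain ⟨S, v, hv⟩ := h.factor b hb0
  obtain ⟨z, hz⟩ := key (e + 2 * S + 2)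
  obtain ⟨x, hx⟩ := hdvd z (e + S + 1) (by convert hz using 2; ring)
  have hzd : π ^ (S + 2) ∣ z := by
    refine ⟨w' * x, mul_left_cancel₀ (pow_ne_zero e hπ) ?_⟩
    rw [show e + S + 1 + 1 = e + (S + 2) by ring, pow_add] at hx
    linear_combination -π ^ e * z * hw' - w' * z * hw + w' * hx
  have hbd : π ^ (S + 1) ∣ b := by
    have h1 : π ^ (S + 1) ∣ ε * z ^ 2 :=
      ((pow_dvd_pow π (by omega)).trans (hzd.trans (dvd_pow_self z two_ne_zero))).mul_left _
    exact (dvd_sub_left h1).mp ((pow_dvd_pow π (by omega)).trans hz)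
  rw [hv, mul_comm, pow_succ] at hbd
  exact h.not_dvd_unit v.isUnit ((mul_dvd_mul_iff_left (pow_ne_zero S hπ)).mp hbd)

/-- Elements that are squares modulo `2` give diagonal binary lattices represented by `I₅`.
Here `g = (α, α, α, 3α, -9)`, `h = (1, 1, 1, 2, α)`, `h' = (-1, -1, -1, -5, -2α)` with
`α² = -7` span `⟨-3⟩ ⊥ H` inside `I₅`, with orthogonal complement the root lattice
`{(p + q, -p, -q, 0, 0)}`. -/
theorem rep_five (h : IsDyadicRing R π e) (h2 : (2 : R) ≠ 0) {b₁ b₂ : R}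
    (hb₁0 : b₁ ≠ 0) (hb₂0 : b₂ ≠ 0)
    (hb₁ : ∃ s : R, 2 ∣ b₁ - s ^ 2) (hb₂ : ∃ t : R, 2 ∣ b₂ - t ^ 2) :
    ∃ u v : Fin 5 → R, (∑ i, u i ^ 2) = b₁ ∧ (∑ i, v i ^ 2) = b₂ ∧ (∑ i, u i * v i) = 0 := by
  obtain ⟨α, hα⟩ := h.sqrt_neg_seven
  obtain ⟨s, r, hr⟩ := hb₁
  have hb₂' : ∃ z : R, 2 ∣ b₂ - (-3) * z ^ 2 := by
    obtain ⟨t, ht⟩ := hb₂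
    refine ⟨t, ?_⟩
    rw [show b₂ - (-3) * t ^ 2 = (b₂ - t ^ 2) + 2 * (2 * t ^ 2) by ring]
    exact dvd_add ht (dvd_mul_right _ _)
  rcases h.rep_or_square h2 h.unit_three.neg hb₂0 hb₂' with ⟨z, p, q, hz⟩ | ⟨y, hy⟩
  · -- `u = s g + h + r' h'` and `v = z g + 3 s z h' + (p + q, -p, -q, 0, 0)`
    set r' := r + 2 * s ^ 2 with hr'
    set y := 3 * s * z with hy
    refine ⟨![s * α + 1 - r', s * α + 1 - r', s * α + 1 - r', 3 * s * α + 2 - 5 * r',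
        -9 * s + α - 2 * α * r'],
      ![z * α - y + (p + q), z * α - y - p, z * α - y - q, 3 * z * α - 5 * y,
        -9 * z - 2 * α * y], ?_, ?_, ?_⟩ <;>
    simp only [Fin.sum_univ_five, Matrix.cons_val] <;> rw [hy, hr'] at *
    · linear_combination (12 * s ^ 2 + (1 - 2 * (r + 2 * s ^ 2)) ^ 2) * hα - hr
    · linear_combination (12 * z ^ 2 + 4 * (3 * s * z) ^ 2) * hα - hz
    · linear_combination (12 * s * z - 2 * (3 * s * z) * (1 - 2 * (r + 2 * s ^ 2))) * hα
  · rcases h.rep_or_square h2 isUnit_one hb₁0 ⟨s, r, by rw [one_mul]; exact hr⟩ with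
      ⟨z, p, q, hz⟩ | ⟨z, hz⟩
    · refine ⟨![p + q, -p, -q, z, 0], ![0, 0, 0, 0, 3 * y], ?_, ?_, ?_⟩ <;>
        simp only [Fin.sum_univ_five, Matrix.cons_val]
      · rw [hz]; ring
      · rw [hy]; ring
      · ring
    · -- `-3 = α² + 2²`
      refine ⟨![z * α, 2 * z, 0, 0, 0], ![0, 0, 0, 0, 3 * y], ?_, ?_, ?_⟩ <;>
        simp only [Fin.sum_univ_five, Matrix.cons_val]
      · rw [hz]; linear_combination z ^ 2 * hα
      · rw [hy]; ring
      · ring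

end IsDyadicRing

/-! ### Finite discrete valuation rings over `ℤ₂` are dyadic -/

/-- A finite `ℤ₂`-algebra is complete with respect to powers of `2`: limits of Cauchy sequences
are computed in coordinates with respect to a finite generating family. -/
theorem two_adic_limit {R : Type*} [CommRing R] [Algebra ℤ_[2] R] [Module.Finite ℤ_[2] R]
    (f : ℕ → R) (hf : ∀ n, (2 : R) ^ n ∣ f (n + 1) - f n) :
    ∃ L : R, ∀ n, (2 : R) ^ n ∣ L - f n := by
  obtain ⟨N, φ, hφ⟩ := Module.Finite.exists_fin' ℤ_[2] R
  choose d hd using hf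
  choose w hw using fun n => hφ (d n)
  have hsmul : ∀ (n : ℕ) (x : Fin N → ℤ_[2]), φ ((2 : ℤ_[2]) ^ n • x) = 2 ^ n * φ x := by
    intro n x
    rw [map_smul, Algebra.smul_def, map_pow, map_ofNat]
  -- partial sums of the coordinates of the increments
  let g : ℕ → Fin N → ℤ_[2] := fun n => ∑ m ∈ Finset.range n, (2 : ℤ_[2]) ^ m • w m
  have hg : ∀ n, φ (g n) = f n - f 0 := by
    intro n
    induction n with
    | zero => simp [g]
    | succ n ih =>
      have : g (n + 1) = g n + (2 : ℤ_[2]) ^ n • w n := Finset.sum_range_succ _ _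
      rw [this, map_add, ih, hsmul, hw, ← hd]
      ring
  have hmem : ∀ (n : ℕ) (x : ℤ_[2]),
      x ∈ (IsLocalRing.maximalIdeal ℤ_[2] ^ n • ⊤ : Ideal ℤ_[2]) ↔ (2 : ℤ_[2]) ^ n ∣ x := by
    intro n x
    rw [smul_eq_mul, Ideal.mul_top, PadicInt.maximalIdeal_eq_span_p, Ideal.span_singleton_pow,
      Ideal.mem_span_singleton]
    norm_num
  have hcauchy : ∀ i m n, m ≤ n → (2 : ℤ_[2]) ^ m ∣ g m i - g n i := by
    intro i m n hmn
    induction n, hmn using Nat.le_induction with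
    | base => simp
    | succ n hn ih =>
      have : g (n + 1) i = g n i + 2 ^ n * w n i := by
        simp [g, Finset.sum_range_succ]
      rw [this, show g m i - (g n i + 2 ^ n * w n i) = (g m i - g n i) - 2 ^ n * w n i by ring]
      exact dvd_sub ih ((pow_dvd_pow 2 hn).mul_right _)
  have hlim : ∀ i, ∃ l : ℤ_[2], ∀ n, (2 : ℤ_[2]) ^ n ∣ g n i - l := by
    intro i
    obtain ⟨l, hl⟩ := IsPrecomplete.prec
      (inferInstance : IsPrecomplete (IsLocalRing.maximalIdeal ℤ_[2]) ℤ_[2])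
      (f := fun n => g n i) (fun {m n} hmn => by
        rw [SModEq.sub_mem, hmem]
        exact hcauchy i m n hmn)
    refine ⟨l, fun n => ?_⟩
    have := hl n
    rwa [SModEq.sub_mem, hmem] at this
  choose l hl using hlim
  refine ⟨f 0 + φ l, fun n => ?_⟩
  choose c hc using fun i => hl i n
  refine ⟨-φ c, ?_⟩
  have h1 : g n - l = (2 : ℤ_[2]) ^ n • c := by
    ext1 i
    simp [hc]
  have h2 := congrArg φ h1
  rw [hsmul, map_sub, hg] at h2
  linear_combination -h2

/-- The image of the Artin–Schreier map of a finite field of characteristic two has index two. -/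
theorem artinSchreier_finite (k : Type*) [Field k] [Finite k] [CharP k 2] :
    (∃ η : k, η ^ 2 + η + 1 = 0) ∨ ∀ ρ : k, ∃ η : k, ρ = η ^ 2 + η ∨ ρ = η ^ 2 + η + 1 := by
  let φ : k →+ k :=
    { toFun := fun x => x ^ 2 + x
      map_zero' := by simp
      map_add' := fun x y => by rw [add_pow_char]; ring }
  have hφ : ∀ x, φ x = x ^ 2 + x := fun x => rfl
  have h11 : (1 : k) + 1 = 0 := CharTwo.add_self_eq_zero 1
  have hker : (φ.ker : Set k) = {0, 1} := by
    ext x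
    simp only [SetLike.mem_coe, AddMonoidHom.mem_ker, hφ, Set.mem_insert_iff,
      Set.mem_singleton_iff]
    constructor
    · intro hx
      have : x * (x - 1) = 0 := by linear_combination hx - x * h11
      rcases mul_eq_zero.mp this with h | h
      · exact Or.inl h
      · exact Or.inr (sub_eq_zero.mp h)
    · rintro (rfl | rfl)
      · simp
      · simpa using h11
  have hcard : Nat.card φ.ker = 2 := by
    have : Nat.card φ.ker = (φ.ker : Set k).ncard := rfl
    rw [this, hker, Set.ncard_pair zero_ne_one]
  have hidx : φ.range.index = 2 := by
    have h1 := φ.ker.card_mul_index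
    have h2 := φ.range.card_mul_index
    rw [AddSubgroup.index_ker, hcard] at h1
    have hpos : 0 < Nat.card φ.range := Nat.card_pos
    rw [← h1, mul_comm] at h2
    exact Nat.eq_of_mul_eq_mul_right hpos h2
  by_cases hone : (1 : k) ∈ φ.range
  · obtain ⟨η, hη⟩ := hone
    rw [hφ] at hη
    exact Or.inl ⟨η, by rw [hη, h11]⟩
  · refine Or.inr fun ρ => ?_
    by_cases hρ : ρ ∈ φ.range
    · obtain ⟨η, hη⟩ := hρ
      exact ⟨η, Or.inl hη.symm⟩
    · obtain ⟨η, hη⟩ := (AddSubgroup.add_mem_iff_of_index_two hidx).mpr (iff_of_false hρ hone)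
      rw [hφ] at hη
      exact ⟨η, Or.inr (by linear_combination -hη - h11)⟩

/-- A discrete valuation ring finite over `ℤ₂` is a dyadic ring: completeness gives Hensel's
lemma, and finiteness of the residue field gives the rest. -/
theorem isDyadicRing_of_finite {R : Type*} [CommRing R] [IsDomain R] [Algebra ℤ_[2] R]
    [Module.Finite ℤ_[2] R] {π : R} {e : ℕ}
    (factor : ∀ x : R, x ≠ 0 → ∃ (n : ℕ) (c : Rˣ), x = c * π ^ n)
    (two_eq : ∃ c : Rˣ, (2 : R) = c * π ^ e) (h20 : (2 : R) ≠ 0) (pos : 0 < e)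
    (not_unit : ¬ IsUnit π) : IsDyadicRing R π e := by
  have hπ0 : π ≠ 0 := by
    rintro rfl
    obtain ⟨c, hc⟩ := two_eq
    rw [zero_pow pos.ne', mul_zero] at hc
    exact h20 hc
  have hπ2 : π ^ e ∣ 2 := by
    obtain ⟨c, hc⟩ := two_eq
    exact Dvd.intro_left _ hc.symm
  have h2π : (2 : R) ∣ π ^ e := by
    obtain ⟨c, hc⟩ := two_eq
    exact ⟨(c⁻¹ : Rˣ), by rw [hc, mul_right_comm, Units.mul_inv, one_mul]⟩
  have hunit : ∀ x : R, ¬ IsUnit x ↔ π ∣ x := by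
    intro x
    constructor
    · intro hx
      by_cases hx0 : x = 0
      · rw [hx0]; exact dvd_zero _
      obtain ⟨n, c, rfl⟩ := factor x hx0
      rcases Nat.eq_zero_or_pos n with rfl | hn
      · exact absurd (by simp) hx
      · exact (dvd_pow_self π hn.ne').mul_left _
    · exact fun hd hx => not_unit (isUnit_of_dvd_unit hd hx)
  have : IsLocalRing R := IsLocalRing.of_nonunits_add fun a b ha hb =>
    (hunit _).mpr (dvd_add ((hunit _).mp ha) ((hunit _).mp hb))
  have hres : ∀ x : R, IsLocalRing.residue R x = 0 ↔ π ∣ x := by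
    intro x
    rw [IsLocalRing.residue_eq_zero_iff, IsLocalRing.mem_maximalIdeal, mem_nonunits_iff, hunit]
  have hπd2 : π ∣ 2 := (dvd_pow_self π pos.ne').trans hπ2
  have : IsLocalHom (algebraMap ℤ_[2] R) := ⟨fun a ha => by
    by_contra hna
    have h1 : a ∈ IsLocalRing.maximalIdeal ℤ_[2] := hna
    rw [PadicInt.maximalIdeal_eq_span_p, Ideal.mem_span_singleton] at h1
    obtain ⟨c, rfl⟩ := h1
    refine (hunit _).mpr ?_ ha
    rw [map_mul]
    exact Dvd.dvd.mul_right (by rw [Nat.cast_ofNat, map_ofNat]; exact hπd2) _⟩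
  have : Finite (IsLocalRing.ResidueField R) :=
    IsLocalRing.ResidueField.finite_of_finite (R := ℤ_[2]) inferInstance
  have : CharP (IsLocalRing.ResidueField R) 2 := by
    refine CharTwo.of_one_ne_zero_of_two_eq_zero one_ne_zero ?_
    have := (hres 2).mpr hπd2
    rwa [map_ofNat] at this
  have hmem : ∀ (n : ℕ) (x : R), x ∈ (Ideal.span {π} ^ n • ⊤ : Ideal R) ↔ π ^ n ∣ x := by
    intro n x
    rw [smul_eq_mul, Ideal.mul_top, Ideal.span_singleton_pow, Ideal.mem_span_singleton]
  have : IsHausdorff (Ideal.span {π}) R := ⟨fun x hx => by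
    by_contra hx0
    obtain ⟨n, c, rfl⟩ := factor x hx0
    have h1 := hx (n + 1)
    rw [SModEq.sub_mem, hmem, sub_zero, mul_comm, pow_succ,
      mul_dvd_mul_iff_left (pow_ne_zero n hπ0)] at h1
    exact (hunit _).mpr h1 c.isUnit⟩
  have : IsPrecomplete (Ideal.span {π}) R := ⟨fun f hf => by
    have hf' : ∀ {m n : ℕ}, m ≤ n → π ^ m ∣ f m - f n := fun {m n} hmn => by
      have := hf hmn
      rwa [SModEq.sub_mem, hmem] at this
    -- along multiples of `e` the sequence is Cauchy for powers of `2`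
    obtain ⟨L, hL⟩ := two_adic_limit (fun n => f (e * n)) (fun n => by
      refine (pow_dvd_pow_of_dvd h2π n).trans ?_
      rw [← pow_mul, ← neg_sub, dvd_neg]
      exact hf' (Nat.mul_le_mul_left e n.le_succ))
    refine ⟨L, fun n => ?_⟩
    rw [SModEq.sub_mem, hmem, show f n - L = (f n - f (e * n)) - (L - f (e * n)) by ring]
    refine dvd_sub (hf' (Nat.le_mul_of_pos_left n pos)) ?_
    exact (pow_dvd_pow_of_dvd hπd2 n).trans (hL n)⟩
  have : IsAdicComplete (Ideal.span {π}) R := {}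
  refine ⟨factor, two_eq, pos, not_unit, ?_, ?_, ?_⟩
  · intro x
    obtain ⟨y, hy⟩ := (Finite.injective_iff_surjective.mp
      (frobenius_inj (IsLocalRing.ResidueField R) 2)) (IsLocalRing.residue R x)
    obtain ⟨y, rfl⟩ := IsLocalRing.residue_surjective y
    refine ⟨y, (hres _).mp ?_⟩
    rw [frobenius_def] at hy
    rw [map_sub, map_pow, hy, sub_self]
  · intro a ρ ha hρ
    obtain ⟨x, hx, -⟩ := HenselianRing.is_henselian (I := Ideal.span {π})
      (Polynomial.X ^ 2 + (Polynomial.C a * Polynomial.X + Polynomial.C (-ρ)))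
      (by monicity!) 0
      (by
        rw [Ideal.mem_span_singleton]
        simpa using hρ)
      (by simpa using ha.map (Ideal.Quotient.mk (Ideal.span {π})))
    refine ⟨x, ?_⟩
    simp only [Polynomial.IsRoot.def, Polynomial.eval_add, Polynomial.eval_pow,
      Polynomial.eval_X, Polynomial.eval_mul, Polynomial.eval_C] at hx
    linear_combination hx
  · rcases artinSchreier_finite (IsLocalRing.ResidueField R) with ⟨η, hη⟩ | has
    · obtain ⟨η, rfl⟩ := IsLocalRing.residue_surjective η
      exact Or.inl ⟨η, (hres _).mp (by simpa using hη)⟩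
    · refine Or.inr fun ρ => ?_
      obtain ⟨η, hη⟩ := has (IsLocalRing.residue R ρ)
      obtain ⟨η, rfl⟩ := IsLocalRing.residue_surjective η
      refine ⟨η, hη.imp (fun h => (hres _).mp ?_) (fun h => (hres _).mp ?_)⟩ <;>
      · rw [map_sub, h]
        simp

/-! ### Quadratic defects and squares modulo two -/

/-- `ord` is a surjective discrete valuation on `F` (written additively) whose valuation ring is
the integral closure of `ℤ₂`. -/
structure IsNormalizedOrd {F : Type*} [Field F] [Algebra ℤ_[2] F] (ord : F → WithTop ℤ) :
    Prop where
  top_iff : ∀ x : F, ord x = ⊤ ↔ x = 0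
  map_mul : ∀ x y : F, ord (x * y) = ord x + ord y
  map_add : ∀ x y : F, min (ord x) (ord y) ≤ ord (x + y)
  surj : ∀ n : ℤ, ∃ x : F, ord x = (n : WithTop ℤ)
  nonneg_iff : ∀ x : F, 0 ≤ ord x ↔ IsIntegral ℤ_[2] x

namespace IsNormalizedOrd

variable {F : Type*} [Field F] [Algebra ℤ_[2] F] {ord : F → WithTop ℤ}

theorem exists_int (h : IsNormalizedOrd ord) {x : F} (hx : x ≠ 0) :
    ∃ n : ℤ, ord x = (n : WithTop ℤ) := by
  obtain ⟨n, hn⟩ := WithTop.ne_top_iff_exists.mp (fun ht => hx ((h.top_iff x).mp ht))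
  exact ⟨n, hn.symm⟩

theorem zero (h : IsNormalizedOrd ord) : ord 0 = ⊤ := (h.top_iff 0).mpr rfl

theorem one (h : IsNormalizedOrd ord) : ord 1 = 0 := by
  obtain ⟨n, hn⟩ := h.exists_int (one_ne_zero (α := F))
  have h1 := h.map_mul 1 1
  rw [mul_one, hn, ← WithTop.coe_add, WithTop.coe_inj] at h1
  rw [hn, show n = 0 by omega, WithTop.coe_zero]

theorem neg (h : IsNormalizedOrd ord) (x : F) : ord (-x) = ord x := by
  have h1 : ord (-1) = 0 := by
    obtain ⟨n, hn⟩ := h.exists_int (neg_ne_zero.mpr (one_ne_zero (α := F)))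
    have h1 := h.map_mul (-1) (-1)
    rw [neg_mul_neg, mul_one, h.one, hn, ← WithTop.coe_add, ← WithTop.coe_zero,
      WithTop.coe_inj] at h1
    rw [hn, show n = 0 by omega, WithTop.coe_zero]
  rw [← neg_one_mul, h.map_mul, h1, zero_add]

theorem inv (h : IsNormalizedOrd ord) {x : F} {n : ℤ} (hx : ord x = n) : ord x⁻¹ = (-n : ℤ) := by
  have hx0 : x ≠ 0 := by
    rintro rfl
    rw [h.zero] at hx
    exact WithTop.top_ne_coe hx
  obtain ⟨m, hm⟩ := h.exists_int (inv_ne_zero hx0)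
  have h1 := h.map_mul x x⁻¹
  rw [mul_inv_cancel₀ hx0, h.one, hx, hm, ← WithTop.coe_add, ← WithTop.coe_zero,
    WithTop.coe_inj] at h1
  rw [hm, show m = -n by omega]

theorem pow (h : IsNormalizedOrd ord) {x : F} {n : ℤ} (hx : ord x = n) (m : ℕ) :
    ord (x ^ m) = (m * n : ℤ) := by
  induction m with
  | zero => rw [pow_zero, h.one]; simp
  | succ m ih =>
    rw [pow_succ, h.map_mul, ih, hx, ← WithTop.coe_add]
    congr 1
    push_cast
    ring

theorem le_iff (h : IsNormalizedOrd ord) (x y : F) :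
    ord x ≤ ord y ↔ ∃ t, 0 ≤ ord t ∧ y = x * t := by
  constructor
  · intro hle
    by_cases hx : x = 0
    · rw [hx, h.zero, top_le_iff, h.top_iff] at hle
      exact ⟨0, by rw [h.zero]; exact le_top, by rw [hle, mul_zero]⟩
    obtain ⟨n, hn⟩ := h.exists_int hx
    refine ⟨x⁻¹ * y, ?_, by rw [mul_inv_cancel_left₀ hx]⟩
    by_cases hy : y = 0
    · rw [hy, mul_zero, h.zero]; exact le_top
    obtain ⟨m, hm⟩ := h.exists_int hy
    rw [hn, hm, WithTop.coe_le_coe] at hle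
    rw [h.map_mul, h.inv hn, hm, ← WithTop.coe_add, ← WithTop.coe_zero, WithTop.coe_le_coe]
    omega
  · rintro ⟨t, ht, rfl⟩
    rw [h.map_mul]
    exact le_add_of_nonneg_right ht

theorem add_ge (h : IsNormalizedOrd ord) {n : WithTop ℤ} {x y : F} (hx : n ≤ ord x)
    (hy : n ≤ ord y) : n ≤ ord (x + y) := (le_min hx hy).trans (h.map_add x y)

theorem sub_ge (h : IsNormalizedOrd ord) {n : WithTop ℤ} {x y : F} (hx : n ≤ ord x)
    (hy : n ≤ ord y) : n ≤ ord (x - y) := by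
  rw [sub_eq_add_neg]
  exact h.add_ge hx ((h.neg y).symm ▸ hy)

theorem mul_nonneg (h : IsNormalizedOrd ord) {x y : F} (hx : 0 ≤ ord x)
    (hy : 0 ≤ ord y) : 0 ≤ ord (x * y) := by
  rw [h.map_mul]
  exact add_nonneg hx hy

theorem of_sq_nonneg (h : IsNormalizedOrd ord) {x : F} (hx : 0 ≤ ord (x ^ 2)) : 0 ≤ ord x := by
  by_cases hx0 : x = 0
  · rw [hx0, h.zero]; exact le_top
  obtain ⟨n, hn⟩ := h.exists_int hx0
  rw [h.pow hn, ← WithTop.coe_zero, WithTop.coe_le_coe] at hx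
  rw [hn, ← WithTop.coe_zero, WithTop.coe_le_coe]
  push_cast at hx
  omega

theorem two_nonneg (h : IsNormalizedOrd ord) : 0 ≤ ord 2 := by
  rw [← one_add_one_eq_two]
  exact h.add_ge h.one.ge h.one.ge

/-- The quadratic defect is at least `k` exactly if some square approximates `c` to relative
order `k`. -/
theorem le_quadDefect_iff (h : IsNormalizedOrd ord) {c : F} {S : ℤ} (hS : ord c = S) (k : ℤ) :
    (k : WithTop ℤ) ≤ quadDefect ord c ↔ ∃ x : F, ((k + S : ℤ) : WithTop ℤ) ≤ ord (c - x ^ 2) := by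
  have hc : c ≠ 0 := by
    rintro rfl
    rw [h.zero] at hS
    exact WithTop.top_ne_coe hS
  have hglb : IsGLB {v : WithTop ℤ | ∃ z : F,
      (∀ x : F, ∃ t : F, 0 ≤ ord t ∧ z = (c - x ^ 2) * t) ∧ v = ord (c⁻¹ * z)}
      (quadDefect ord c) := by
    refine WithTop.isGLB_sInf' ⟨0, ?_⟩
    rintro v ⟨z, hz, rfl⟩
    obtain ⟨t, ht, rfl⟩ := hz 0
    simpa [inv_mul_cancel_left₀ hc] using ht
  rw [le_isGLB_iff hglb]
  constructor
  · intro hk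
    by_contra! hlt
    obtain ⟨z, hz⟩ := h.surj (k + S - 1)
    have h1 := hk ⟨z, fun x => ?_, rfl⟩
    · rw [h.map_mul, h.inv hS, hz, ← WithTop.coe_add, WithTop.coe_le_coe] at h1
      omega
    · rw [← h.le_iff, hz]
      have h2 := hlt x
      have h3 : c - x ^ 2 ≠ 0 := by
        intro h0
        rw [h0, h.zero] at h2
        exact not_top_lt h2
      obtain ⟨n, hn⟩ := h.exists_int h3
      rw [hn, WithTop.coe_lt_coe] at h2
      rw [hn, WithTop.coe_le_coe]
      omega
  · rintro ⟨x, hx⟩ v ⟨z, hz, rfl⟩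
    have h1 := hx.trans ((h.le_iff _ _).mpr (hz x))
    by_cases hz0 : z = 0
    · rw [hz0, mul_zero, h.zero]; exact le_top
    obtain ⟨n, hn⟩ := h.exists_int hz0
    rw [hn, WithTop.coe_le_coe] at h1
    rw [h.map_mul, h.inv hS, hn, ← WithTop.coe_add, WithTop.coe_le_coe]
    omega

/-- `b` is integral and congruent to an integral square modulo `2`. -/
def SquareModTwo (ord : F → WithTop ℤ) (b : F) : Prop :=
  ∃ s r : F, 0 ≤ ord s ∧ 0 ≤ ord r ∧ b = s ^ 2 + 2 * r

theorem SquareModTwo.nonneg (h : IsNormalizedOrd ord) {b : F} (hb : SquareModTwo ord b) :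
    0 ≤ ord b := by
  obtain ⟨s, r, hs, hr, rfl⟩ := hb
  rw [sq]
  exact h.add_ge (h.mul_nonneg hs hs) (h.mul_nonneg h.two_nonneg hr)

theorem squareModTwo_sum (h : IsNormalizedOrd ord) {ι : Type*} (I : Finset ι) (u : ι → F)
    (hu : ∀ i, 0 ≤ ord (u i)) : SquareModTwo ord (∑ i ∈ I, u i ^ 2) := by
  classical
  induction I using Finset.induction_on with
  | empty => exact ⟨0, 0, by rw [h.zero]; exact le_top, by rw [h.zero]; exact le_top, by simp⟩
  | insert i I hi ih =>
    obtain ⟨s, r, hs, hr, hsr⟩ := ih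
    refine ⟨u i + s, r - u i * s, h.add_ge (hu i) hs, h.sub_ge hr (h.mul_nonneg (hu i) hs), ?_⟩
    rw [Finset.sum_insert hi, hsr]
    ring

/-- For `ord b₁ ≤ ord b₂`, the conditions on quadratic defects say that `b₁` and `b₂` are both
integral squares modulo `2`. -/
theorem defect_iff (h : IsNormalizedOrd ord) {e : ℤ} (he : ord 2 = e)
    {b₁ b₂ : F} {S₁ S₂ : ℤ} (hS₁ : ord b₁ = S₁) (hS₂ : ord b₂ = S₂) (hle : S₁ ≤ S₂) :
    (0 ≤ S₁ ∧ ((e - S₁ : ℤ) : WithTop ℤ) ≤ quadDefect ord (-b₁) ∧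
      ((e - S₂ : ℤ) : WithTop ℤ) ≤ quadDefect ord (-(b₁ * b₂))) ↔
    SquareModTwo ord b₁ ∧ SquareModTwo ord b₂ := by
  have hS₁₂ : ord (-(b₁ * b₂)) = (S₁ + S₂ : ℤ) := by
    rw [h.neg, h.map_mul, hS₁, hS₂, WithTop.coe_add]
  have h2b : ord (2 * b₁) = (e + S₁ : ℤ) := by rw [h.map_mul, he, hS₁, WithTop.coe_add]
  rw [h.le_quadDefect_iff ((h.neg b₁).trans hS₁), h.le_quadDefect_iff hS₁₂,
    show e - S₁ + S₁ = e by ring, show e - S₂ + (S₁ + S₂) = e + S₁ by ring, ← he, ← h2b]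
  have he0 : 0 ≤ e := by
    have := h.two_nonneg
    rwa [he, ← WithTop.coe_zero, WithTop.coe_le_coe] at this
  constructor
  · rintro ⟨hS0, ⟨x, hx⟩, ⟨y, hy⟩⟩
    obtain ⟨t, ht, hxt⟩ := (h.le_iff _ _).mp hx
    have hb₁0 : 0 ≤ ord b₁ := by rwa [hS₁, ← WithTop.coe_zero, WithTop.coe_le_coe]
    have hx2 : 0 ≤ ord (x ^ 2) := by
      rw [show x ^ 2 = -b₁ - 2 * t by linear_combination -hxt]
      exact h.sub_ge ((h.neg b₁).symm ▸ hb₁0) (h.mul_nonneg h.two_nonneg ht)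
    have hr0 : 0 ≤ ord (-t - x ^ 2) := h.sub_ge ((h.neg t).symm ▸ ht) hx2
    have hxr : b₁ = x ^ 2 + 2 * (-t - x ^ 2) := by linear_combination -hxt
    refine ⟨⟨x, -t - x ^ 2, h.of_sq_nonneg hx2, hr0, hxr⟩, ?_⟩
    generalize -t - x ^ 2 = r at hr0 hxr
    obtain ⟨w, hw, hyw⟩ := (h.le_iff _ _).mp hy
    rcases le_or_gt e S₂ with heS | heS
    · obtain ⟨t, ht, hbt⟩ := (h.le_iff 2 b₂).mp (by rw [he, hS₂, WithTop.coe_le_coe]; exact heS)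
      exact ⟨0, t, by rw [h.zero]; exact le_top, ht, by rw [hbt]; ring⟩
    -- here `ord b₁ < e`, so `x ^ 2` has the same order as `b₁`, and `y / x` is the root sought
    have h2r : ((S₁ + 1 : ℤ) : WithTop ℤ) ≤ ord (2 * r) := by
      have h1 : ord 2 ≤ ord (2 * r) := (h.le_iff _ _).mpr ⟨r, hr0, rfl⟩
      refine le_trans ?_ h1
      rw [he, WithTop.coe_le_coe]
      omega
    have hxS : ord (x ^ 2) ≤ S₁ := by
      by_contra! hlt
      have h1 : ((S₁ + 1 : ℤ) : WithTop ℤ) ≤ ord (x ^ 2) := by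
        by_cases hx0 : x ^ 2 = 0
        · rw [hx0, h.zero]; exact le_top
        obtain ⟨n, hn⟩ := h.exists_int hx0
        rw [hn, WithTop.coe_lt_coe] at hlt
        rw [hn, WithTop.coe_le_coe]
        omega
      have h3 := h.add_ge h1 h2r
      rw [← hxr, hS₁, WithTop.coe_le_coe] at h3
      omega
    have hx0 : x ≠ 0 := by
      rintro rfl
      rw [zero_pow two_ne_zero, h.zero] at hxS
      exact WithTop.coe_ne_top (top_le_iff.mp hxS)
    have hb2w : ord (x ^ 2) ≤ ord (b₂ + 2 * w) := by
      refine hxS.trans (h.add_ge ?_ ?_)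
      · rw [hS₂, WithTop.coe_le_coe]; exact hle
      · refine le_trans ?_ ((h.le_iff 2 (2 * w)).mpr ⟨w, hw, rfl⟩)
        rw [he, WithTop.coe_le_coe]; omega
    obtain ⟨μ, hμ, hbμ⟩ := (h.le_iff _ _).mp hb2w
    have hyx : (y / x) ^ 2 = -(b₂ + 2 * w) - 2 * r * μ := by
      rw [div_pow, div_eq_iff (pow_ne_zero 2 hx0)]
      linear_combination -hyw - (b₂ + 2 * w) * hxr - 2 * r * hbμ
    have hb₂0 : 0 ≤ ord b₂ := by
      rw [hS₂, ← WithTop.coe_zero, WithTop.coe_le_coe]; omega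
    have hyx0 : 0 ≤ ord ((y / x) ^ 2) := by
      rw [hyx]
      refine h.sub_ge ?_ (h.mul_nonneg (h.mul_nonneg h.two_nonneg hr0) hμ)
      rw [h.neg]
      exact h.add_ge hb₂0 (h.mul_nonneg h.two_nonneg hw)
    refine ⟨y / x, -(y / x) ^ 2 - w - r * μ, h.of_sq_nonneg hyx0, ?_, ?_⟩
    · exact h.sub_ge (h.sub_ge ((h.neg _).symm ▸ hyx0) hw) (h.mul_nonneg hr0 hμ)
    · linear_combination hyx
  · rintro ⟨hb₁, hb₂⟩
    have hb₁0 := SquareModTwo.nonneg h hb₁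
    obtain ⟨s, r, hs, hr, hsr⟩ := hb₁
    obtain ⟨t, r', ht, hr', htr⟩ := hb₂
    refine ⟨by rwa [hS₁, ← WithTop.coe_zero, WithTop.coe_le_coe] at hb₁0, ⟨s, ?_⟩, ?_⟩
    · rw [h.le_iff]
      refine ⟨-s ^ 2 - r, h.sub_ge ?_ hr, by rw [hsr]; ring⟩
      rw [h.neg, sq]
      exact h.mul_nonneg hs hs
    · rcases le_or_gt e S₂ with heS | heS
      · refine ⟨0, ?_⟩
        rw [zero_pow two_ne_zero, sub_zero, hS₁₂, h2b, WithTop.coe_le_coe]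
        omega
      have ht2 : ord b₁ ≤ ord (t ^ 2) := by
        rw [show t ^ 2 = b₂ - 2 * r' by rw [htr]; ring]
        refine h.sub_ge ?_ ?_
        · rw [hS₁, hS₂, WithTop.coe_le_coe]; exact hle
        · refine le_trans ?_ ((h.le_iff 2 (2 * r')).mpr ⟨r', hr', rfl⟩)
          rw [he, hS₁, WithTop.coe_le_coe]; omega
      obtain ⟨τ, hτ, htτ⟩ := (h.le_iff _ _).mp ht2
      refine ⟨s * t, (h.le_iff _ _).mpr ⟨r * τ - t ^ 2 - r', ?_, ?_⟩⟩
      · refine h.sub_ge (h.sub_ge (h.mul_nonneg hr hτ) ?_) hr'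
        rw [sq]
        exact h.mul_nonneg ht ht
      · linear_combination (-b₁) * htr + t ^ 2 * hsr + 2 * r * htτ

/-- The integral closure of `ℤ₂` in a dyadic local field is a dyadic ring. -/
theorem exists_isDyadicRing [Algebra ℚ_[2] F] [FiniteDimensional ℚ_[2] F]
    [IsScalarTower ℤ_[2] ℚ_[2] F] (h : IsNormalizedOrd ord) :
    ∃ (π : integralClosure ℤ_[2] F) (e : ℕ), IsDyadicRing (integralClosure ℤ_[2] F) π e := by
  have hchar : CharZero F := charZero_of_injective_algebraMap (algebraMap ℚ_[2] F).injective
  have hfin : Module.Finite ℤ_[2] (integralClosure ℤ_[2] F) :=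
    IsIntegralClosure.finite ℤ_[2] ℚ_[2] F _
  have hmem : ∀ x : F, x ∈ integralClosure ℤ_[2] F ↔ 0 ≤ ord x := fun x => (h.nonneg_iff x).symm
  obtain ⟨p, hp⟩ := h.surj 1
  have hp0 : p ≠ 0 := by
    rintro rfl
    rw [h.zero] at hp
    exact WithTop.top_ne_coe hp
  have hpint : p ∈ integralClosure ℤ_[2] F := by
    rw [hmem, hp, ← WithTop.coe_zero, WithTop.coe_le_coe]; exact zero_le_one
  let π : integralClosure ℤ_[2] F := ⟨p, hpint⟩
  have hfac : ∀ (x : integralClosure ℤ_[2] F) (n : ℕ), ord (x : F) = ((n : ℤ) : WithTop ℤ) →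
      ∃ c : (integralClosure ℤ_[2] F)ˣ, x = c * π ^ n := by
    intro x n hn
    have hx0 : (x : F) ≠ 0 := by
      intro h0
      rw [h0, h.zero] at hn
      exact WithTop.top_ne_coe hn
    have hpn := h.pow hp n
    rw [mul_one] at hpn
    have hc : ord ((x : F) * (p ^ n)⁻¹) = ((0 : ℤ) : WithTop ℤ) := by
      rw [h.map_mul, h.inv hpn, hn, ← WithTop.coe_add, add_neg_cancel]
    have hc' := h.inv hc
    have hpn0 := pow_ne_zero n hp0
    refine ⟨⟨⟨_, (hmem _).mpr hc.ge⟩, ⟨_, (hmem _).mpr (by rw [hc', neg_zero]; rfl)⟩, ?_, ?_⟩, ?_⟩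
    · ext
      exact mul_inv_cancel₀ (mul_ne_zero hx0 (inv_ne_zero hpn0))
    · ext
      exact inv_mul_cancel₀ (mul_ne_zero hx0 (inv_ne_zero hpn0))
    · ext
      simp [π, hpn0]
  have hnat : ∀ x : F, x ≠ 0 → 0 ≤ ord x → ∃ n : ℕ, ord x = ((n : ℤ) : WithTop ℤ) := by
    intro x hx hx0
    obtain ⟨n, hn⟩ := h.exists_int hx
    rw [hn, ← WithTop.coe_zero, WithTop.coe_le_coe] at hx0
    exact ⟨n.toNat, by rw [hn, Int.toNat_of_nonneg hx0]⟩
  obtain ⟨e, he⟩ := hnat 2 two_ne_zero h.two_nonneg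
  have hepos : 0 < e := by
    by_contra hne
    have he0 : e = 0 := by omega
    -- otherwise `1/2` would be integral over the integrally closed ring `ℤ₂`
    have h1 : IsIntegral ℤ_[2] (algebraMap ℚ_[2] F 2⁻¹) := by
      rw [← h.nonneg_iff, map_inv₀, map_ofNat, h.inv he, he0]
      rfl
    rw [isIntegral_algebraMap_iff (algebraMap ℚ_[2] F).injective] at h1
    obtain ⟨a, ha⟩ := IsIntegrallyClosed.isIntegral_iff.mp h1
    have h2 : ‖(2⁻¹ : ℚ_[2])‖ ≤ 1 := by
      rw [← ha]
      exact a.2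
    have h3 : ‖(2 : ℚ_[2])‖ = 2⁻¹ := by simpa using Padic.norm_p (p := 2)
    rw [norm_inv, h3] at h2
    norm_num at h2
  refine ⟨π, e, isDyadicRing_of_finite ?_ (hfac 2 e he) ?_ hepos ?_⟩
  · intro x hx
    obtain ⟨n, hn⟩ := hnat x (fun h0 => hx (Subtype.ext h0)) ((hmem _).mp x.2)
    exact ⟨n, hfac x n hn⟩
  · intro h0
    exact two_ne_zero (α := F) (congrArg Subtype.val h0)
  · intro hu
    obtain ⟨c, hc⟩ := hu.exists_right_inv
    have h1 : p * (c : F) = 1 := congrArg Subtype.val hc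
    have h2 := (hmem _).mp c.2
    rw [eq_inv_of_mul_eq_one_right h1, h.inv hp, ← WithTop.coe_zero, WithTop.coe_le_coe] at h2
    omega

/-- Pairs of integral squares modulo `2` are represented by `I₅`. -/
theorem rep_of_squareModTwo [Algebra ℚ_[2] F] [FiniteDimensional ℚ_[2] F]
    [IsScalarTower ℤ_[2] ℚ_[2] F] (h : IsNormalizedOrd ord) {b₁ b₂ : F} (hb₁0 : b₁ ≠ 0)
    (hb₂0 : b₂ ≠ 0) (hb₁ : SquareModTwo ord b₁) (hb₂ : SquareModTwo ord b₂) :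
    RepByIm {x : F | 0 ≤ ord x} 5 b₁ b₂ := by
  have hchar : CharZero F := charZero_of_injective_algebraMap (algebraMap ℚ_[2] F).injective
  obtain ⟨π, e, hR⟩ := h.exists_isDyadicRing
  have hlift : ∀ x : F, 0 ≤ ord x → ∃ y : integralClosure ℤ_[2] F, (y : F) = x :=
    fun x hx => ⟨⟨x, (h.nonneg_iff x).mp hx⟩, rfl⟩
  have hsq : ∀ b : integralClosure ℤ_[2] F, SquareModTwo ord (b : F) →
      ∃ s : integralClosure ℤ_[2] F, 2 ∣ b - s ^ 2 := by
    rintro b ⟨s, r, hs, hr, hb⟩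
    obtain ⟨s, rfl⟩ := hlift s hs
    obtain ⟨r, rfl⟩ := hlift r hr
    refine ⟨s, r, Subtype.ext ?_⟩
    have h2 : ((2 : integralClosure ℤ_[2] F) : F) = 2 := rfl
    push_cast
    rw [hb, h2]
    ring
  obtain ⟨b₁, rfl⟩ := hlift b₁ (SquareModTwo.nonneg h hb₁)
  obtain ⟨b₂, rfl⟩ := hlift b₂ (SquareModTwo.nonneg h hb₂)
  obtain ⟨u, v, hu, hv, huv⟩ := hR.rep_five (b₁ := b₁) (b₂ := b₂)
    (fun h0 => two_ne_zero (α := F) (congrArg Subtype.val h0))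
    (fun h0 => hb₁0 (congrArg Subtype.val h0)) (fun h0 => hb₂0 (congrArg Subtype.val h0))
    (hsq _ hb₁) (hsq _ hb₂)
  refine ⟨fun i => u i, fun i => v i, fun i => (h.nonneg_iff _).mpr (u i).2,
    fun i => (h.nonneg_iff _).mpr (v i).2, ?_, ?_, ?_⟩
  · rw [← hu]; push_cast; rfl
  · rw [← hv]; push_cast; rfl
  · have := congrArg Subtype.val huv
    push_cast at this
    exact this

end IsNormalizedOrd

/-- Let `F` be a dyadic local field with valuation ring
`O_F = {x | 0 ≤ ord x}` (the integral closure of `ℤ₂` in `F`), normalized valuation `ord`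
and `e = ord 2`.  Let `b₁, b₂ ∈ F^×` with `ord b₁ ≤ ord b₂`.  Then the following are
equivalent: (1) `⟨b₁, b₂⟩` is represented by `I₅` over `O_F`; (2) `⟨b₁, b₂⟩` is represented
by `I_m` over `O_F` for some `m ≥ 2`; (3) `ord b₁ ≥ 0`, `d(-b₁) ≥ e - ord b₁` and
`d(-b₁b₂) ≥ e - ord b₂`. -/
theorem rep_by_I5_iff
    (F : Type*) [Field F] [Algebra ℚ_[2] F] [FiniteDimensional ℚ_[2] F]
    [Algebra ℤ_[2] F] [IsScalarTower ℤ_[2] ℚ_[2] F]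
    (ord : F → WithTop ℤ)
    (hord_top : ∀ x : F, ord x = ⊤ ↔ x = 0)
    (hord_mul : ∀ x y : F, ord (x * y) = ord x + ord y)
    (hord_add : ∀ x y : F, min (ord x) (ord y) ≤ ord (x + y))
    (hord_surj : ∀ n : ℤ, ∃ x : F, ord x = (n : WithTop ℤ))
    (hord_int : ∀ x : F, 0 ≤ ord x ↔ IsIntegral ℤ_[2] x)
    (e : ℤ) (he : ord 2 = (e : WithTop ℤ))
    (b₁ b₂ : F) (hb₁ : b₁ ≠ 0) (hb₂ : b₂ ≠ 0)
    (S₁ S₂ : ℤ) (hS₁ : ord b₁ = (S₁ : WithTop ℤ)) (hS₂ : ord b₂ = (S₂ : WithTop ℤ))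
    (hle : S₁ ≤ S₂) :
    (RepByIm {x : F | 0 ≤ ord x} 5 b₁ b₂ ↔
        ∃ m : ℕ, 2 ≤ m ∧ RepByIm {x : F | 0 ≤ ord x} m b₁ b₂) ∧
      (RepByIm {x : F | 0 ≤ ord x} 5 b₁ b₂ ↔
        (0 ≤ S₁ ∧ ((e - S₁ : ℤ) : WithTop ℤ) ≤ quadDefect ord (-b₁) ∧
          ((e - S₂ : ℤ) : WithTop ℤ) ≤ quadDefect ord (-(b₁ * b₂)))) := by
  have h : IsNormalizedOrd ord := ⟨hord_top, hord_mul, hord_add, hord_surj, hord_int⟩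
  rw [h.defect_iff he hS₁ hS₂ hle]
  have hnec : ∀ m, RepByIm {x : F | 0 ≤ ord x} m b₁ b₂ →
      IsNormalizedOrd.SquareModTwo ord b₁ ∧ IsNormalizedOrd.SquareModTwo ord b₂ := by
    rintro m ⟨u, v, hu, hv, rfl, rfl, -⟩
    exact ⟨h.squareModTwo_sum _ u hu, h.squareModTwo_sum _ v hv⟩
  have hsuf : IsNormalizedOrd.SquareModTwo ord b₁ ∧ IsNormalizedOrd.SquareModTwo ord b₂ →
      RepByIm {x : F | 0 ≤ ord x} 5 b₁ b₂ := fun hb => h.rep_of_squareModTwo hb₁ hb₂ hb.1 hb.2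
  exact ⟨⟨fun h5 => ⟨5, by norm_num, h5⟩, fun ⟨m, _, hm⟩ => hsuf (hnec m hm)⟩, hnec 5, hsuf⟩
end
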